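/- arXiv:1110.0174 — 2 statements merged into one kernel-verified Lean document; each statement's English description precedes it below -/
import Mathlib

section
/- Let Γ be a finite simplicial graph. Every limit group over 𝔾(Γ) that is generated by two elements is isomorphic either to a free group (of rank at most 2) or to a free abelian group (of rank at most 2). -/
/-- The set of commutation relators of a simplicial graph: one commutator
`[u,v]` for each pair of adjacent vertices. -/
def raagRels {V : Type*} (Γ : SimpleGraph V) : Set (FreeGroup V) :=
  {r | ∃ u v : V, Γ.Adj u v ∧
    r = FreeGroup.of u * FreeGroup.of v * (FreeGroup.of u)⁻¹ * (FreeGroup.of v)⁻¹}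

/-- The partially commutative group (right-angled Artin group) of a simplicial graph. -/
abbrev Raag {V : Type*} (Γ : SimpleGraph V) := PresentedGroup (raagRels Γ)

/-- `G` is residually `H`. -/
def Residually (H : Type*) [Group H] (G : Type*) [Group G] : Prop :=
  ∀ g : G, g ≠ 1 → ∃ φ : G →* H, φ g ≠ 1

/-- `G` is fully residually `H`. -/
def FullyResidually (H : Type*) [Group H] (G : Type*) [Group G] : Prop :=
  ∀ s : Finset G, (∀ g ∈ s, g ≠ 1) → ∃ φ : G →* H, ∀ g ∈ s, φ g ≠ 1

/-- A limit group over `H`: finitely generated and fully residually `H`. -/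
def IsLimitGroupOver (H : Type*) [Group H] (G : Type*) [Group G] : Prop :=
  Group.FG G ∧ FullyResidually H G

/-!
Two elements of a right-angled Artin group either commute or freely generate a free group of rank
two (Baudisch). By induction on the graph, splitting off a vertex embeds the group into a semidirect
product `F(X) ⋊ K`, where `F(X)` is the free group on a `K`-set `X` and `K` is the group of the
smaller graph. If `a` and `b` do not commute but their images in `K` do, then `⟨a, b⟩` acts on the
Cayley tree of `F(X)`, and commutators of its generating pairs fix no vertex, since they lie in
`F(X)`. Ping-pong for a generating pair of small displacement then shows that the group is free.

The dichotomy passes to residually right-angled Artin groups, as does torsion-freeness, so a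
two-generated one is free of rank two or a finitely generated torsion-free abelian group.
-/

open MulAction
open scoped commutatorElement

theorem comp_lift_pair {G H : Type*} [Group G] [Group H] (φ : G →* H) (a b : G) :
    φ.comp (FreeGroup.lift ![a, b]) = FreeGroup.lift ![φ a, φ b] := by
  ext i : 1
  fin_cases i <;> simp

theorem injective_lift_pair_of_ping_pong {G α : Type*} [Group G] [MulAction G α] {a b : G}
    {A B : Set α} (hA : A.Nonempty) (hB : B.Nonempty) (hAB : Disjoint A B)
    (ha : ∀ n : ℤ, n ≠ 0 → ∀ x ∈ B, a ^ n • x ∈ A)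
    (hb : ∀ n : ℤ, n ≠ 0 → ∀ x ∈ A, b ^ n • x ∈ B) :
    Function.Injective (FreeGroup.lift ![a, b]) := by
  let f : Fin 2 → FreeGroup Unit →* G := fun i => FreeGroup.lift fun _ => ![a, b] i
  have hlift : FreeGroup.lift ![a, b] =
      (Monoid.CoprodI.lift f).comp freeGroupEquivCoprodI.toMonoidHom := by
    ext i; simp [f]
  have hf (i : Fin 2) (u : FreeGroup Unit) (hu : u ≠ 1) :
      ∃ n : ℤ, n ≠ 0 ∧ f i u = ![a, b] i ^ n := by
    obtain ⟨n, rfl⟩ := FreeGroup.freeGroupUnitEquivInt.symm.surjective u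
    exact ⟨n, by rintro rfl; exact hu rfl, by simp [f, FreeGroup.freeGroupUnitEquivInt]⟩
  rw [hlift, MonoidHom.coe_comp]
  refine Function.Injective.comp ?_ freeGroupEquivCoprodI.injective
  refine Monoid.CoprodI.lift_injective_of_ping_pong f (.inr ⟨0, ?_⟩) ![A, B] ?_ ?_ ?_
  · rw [FreeGroup.freeGroupUnitEquivInt.cardinal_eq, Cardinal.mk_denumerable]
    exact Cardinal.natCast_le_aleph0
  · simp [Fin.forall_fin_two, hA, hB]
  · simp [Pairwise, Fin.forall_fin_two, Function.onFun, hAB, hAB.symm]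
  · intro i j hij u hu
    obtain ⟨n, hn, hfu⟩ := hf i u hu
    rw [hfu]
    rintro _ ⟨x, hx, rfl⟩
    fin_cases i <;> fin_cases j
    · exact absurd rfl hij
    · exact ha n hn x hx
    · exact hb n hn x hx
    · exact absurd rfl hij

/-! ### Trees -/

/-- `d` is the path metric on the vertex set of a simplicial tree. This is encoded by the four-point
condition, the fact that closed walks have even length, and the existence of geodesics. -/
structure IsTreeDist {V : Type*} (d : V → V → ℕ) : Prop where
  eq_zero_iff : ∀ {x y}, d x y = 0 ↔ x = y
  comm : ∀ x y, d x y = d y x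
  four_point : ∀ x y z w, d x y + d z w ≤ max (d x z + d y w) (d x w + d y z)
  even_perimeter : ∀ x y z, Even (d x y + d y z + d z x)
  exists_between : ∀ {x y n}, n ≤ d x y → ∃ z, d x z = n ∧ n + d z y = d x y

/-- The Gromov product `(y | z)_x`: in a tree, the length of the common initial segment of the
geodesics `[x, y]` and `[x, z]`. In particular `z` lies on `[x, y]` iff
`gromovProduct d x z y = d x z`. -/
def gromovProduct {V : Type*} (d : V → V → ℕ) (x y z : V) : ℕ :=
  (d x y + d x z - d y z) / 2

namespace IsTreeDist

variable {V : Type*} {d : V → V → ℕ} (hd : IsTreeDist d)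
include hd

theorem self (x : V) : d x x = 0 := hd.eq_zero_iff.mpr rfl

theorem triangle (x y z : V) : d x z ≤ d x y + d y z := by
  have := hd.four_point x z y y
  rw [hd.self y, hd.comm z y, max_self] at this
  exact this

theorem two_mul_gromovProduct (x y z : V) :
    2 * gromovProduct d x y z + d y z = d x y + d x z := by
  have h := hd.triangle y x z
  obtain ⟨k, hk⟩ := hd.even_perimeter x y z
  rw [hd.comm y x] at h
  rw [hd.comm z x] at hk
  rw [gromovProduct]
  omega

theorem gromovProduct_comm (x y z : V) : gromovProduct d x y z = gromovProduct d x z y := by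
  rw [gromovProduct, gromovProduct, hd.comm y z, add_comm]

theorem gromovProduct_le_left (x y z : V) : gromovProduct d x y z ≤ d x y := by
  have := hd.two_mul_gromovProduct x y z
  have := hd.triangle x y z
  omega

theorem gromovProduct_le_right (x y z : V) : gromovProduct d x y z ≤ d x z :=
  hd.gromovProduct_comm x y z ▸ hd.gromovProduct_le_left x z y

theorem gromovProduct_self_right (x y : V) : gromovProduct d x y y = d x y := by
  have := hd.two_mul_gromovProduct x y y
  have := hd.self y
  omega

theorem gromovProduct_self_left (x y : V) : gromovProduct d x x y = 0 :=
  Nat.le_zero.mp (hd.self x ▸ hd.gromovProduct_le_left x x y)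

theorem le_gromovProduct_trans {x y z w : V} {n : ℕ} (hyz : n ≤ gromovProduct d x y z)
    (hzw : n ≤ gromovProduct d x z w) : n ≤ gromovProduct d x y w := by
  have := hd.two_mul_gromovProduct x y z
  have := hd.two_mul_gromovProduct x z w
  have := hd.two_mul_gromovProduct x y w
  have := hd.four_point x z y w
  have := hd.comm z y
  omega

theorem gromovProduct_add_gromovProduct (x y z : V) :
    gromovProduct d x z y + gromovProduct d y z x = d x y := by
  have := hd.two_mul_gromovProduct x z y
  have := hd.two_mul_gromovProduct y z x
  have := hd.comm x y
  have := hd.comm z x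
  have := hd.comm z y
  omega

theorem exists_gromovProduct_eq {x y : V} {n : ℕ} (hn : n ≤ d x y) :
    ∃ z, d x z = n ∧ gromovProduct d x z y = n := by
  obtain ⟨z, hxz, hzy⟩ := hd.exists_between hn
  have := hd.two_mul_gromovProduct x z y
  exact ⟨z, hxz, by omega⟩

theorem eq_of_le_gromovProduct {x y z : V} (hy : d x y ≤ gromovProduct d x y z)
    (hz : d x z ≤ gromovProduct d x y z) : y = z := by
  have := hd.two_mul_gromovProduct x y z
  exact hd.eq_zero_iff.mp (by omega)

end IsTreeDist

/-- An action on a tree by isometries, without inversions, such that a power `g ^ n` with `n ≠ 0`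
of an elliptic element `g` fixes no more vertices than `g` does. An inversion is an element that
exchanges two vertices at odd distance. -/
structure IsIsolatedTreeAction (H : Type*) {V : Type*} [Group H] [MulAction H V]
    (d : V → V → ℕ) : Prop extends IsTreeDist d where
  dist_smul : ∀ (g : H) x y, d (g • x) (g • y) = d x y
  no_inversion : ∀ (g : H) x, g • g • x = x → Even (d x (g • x))
  fixedBy_zpow_subset : ∀ {g : H} {n : ℤ}, (fixedBy V g).Nonempty → n ≠ 0 →
    fixedBy V (g ^ n) ⊆ fixedBy V g

namespace IsIsolatedTreeAction

variable {H V : Type*} [Group H] [MulAction H V] {d : V → V → ℕ}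
  (hd : IsIsolatedTreeAction H d)
include hd

theorem gromovProduct_smul (g : H) (x y z : V) :
    gromovProduct d (g • x) (g • y) (g • z) = gromovProduct d x y z := by
  simp only [gromovProduct, hd.dist_smul]

theorem dist_inv_smul (g : H) (x y : V) : d x (g⁻¹ • y) = d (g • x) y := by
  rw [← hd.dist_smul g, smul_inv_smul]

theorem dist_inv_smul_self (g : H) (x : V) : d x (g⁻¹ • x) = d x (g • x) := by
  rw [hd.dist_inv_smul, hd.comm]

theorem gromovProduct_smul_add (g : H) (x z : V) :
    gromovProduct d x (g • z) (g • x) + gromovProduct d x z (g⁻¹ • x) = d x (g • x) := by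
  rw [← hd.gromovProduct_smul g x z, smul_inv_smul]
  exact hd.gromovProduct_add_gromovProduct x (g • x) (g • z)

theorem gromovProduct_smul_of_fixed {g : H} {x : V} (hx : g • x = x) (y z : V) :
    gromovProduct d x (g • y) (g • z) = gromovProduct d x y z := by
  conv_lhs => rw [← hx]
  exact hd.gromovProduct_smul g x y z

theorem smul_eq_of_le_gromovProduct {g : H} {x y z : V} (hx : g • x = x)
    (hz : d x z ≤ gromovProduct d x z y) (hgz : d x z ≤ gromovProduct d x z (g • y)) :
    g • z = z := by
  have hdist : d x (g • z) = d x z := by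
    conv_lhs => rw [← hx]
    exact hd.dist_smul g x z
  have h : d x z ≤ gromovProduct d x (g • z) z := by
    refine hd.le_gromovProduct_trans (z := g • y) ?_ (hd.gromovProduct_comm .. ▸ hgz)
    rwa [hd.gromovProduct_smul_of_fixed hx]
  exact hd.eq_of_le_gromovProduct (hdist ▸ h) h

theorem gromovProduct_zpow_smul_le {g : H} {n : ℤ} (hn : n ≠ 0) {x : V} (hx : g • x = x) (y : V) :
    gromovProduct d x y (g ^ n • y) ≤ gromovProduct d x y (g • y) := by
  obtain ⟨z, hxz, hzy⟩ := hd.exists_gromovProduct_eq (hd.gromovProduct_le_left x y (g ^ n • y))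
  have hgnz : g ^ n • z = z := hd.smul_eq_of_le_gromovProduct (mem_fixedBy_zpow hx n)
    (hxz.trans_le hzy.ge) (hxz.trans_le (hd.le_gromovProduct_trans hzy.ge le_rfl))
  have hgz : g • z = z := hd.fixedBy_zpow_subset ⟨x, hx⟩ hn hgnz
  refine hd.le_gromovProduct_trans (hzy.ge.trans_eq (hd.gromovProduct_comm ..)) ?_
  conv_rhs => rw [← hgz]
  exact (hd.gromovProduct_smul_of_fixed hx z y).symm ▸ hzy.ge

theorem smul_mem_geodesic {g : H} {x z : V} (hz : gromovProduct d x z (g⁻¹ • x) = d x z) :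
    d x (g • z) + d x z = d x (g • x) ∧ gromovProduct d x (g • z) (g • x) = d x (g • z) := by
  have := hd.gromovProduct_smul_add g x z
  have := hd.two_mul_gromovProduct x (g • z) (g • x)
  have := hd.dist_smul g z x
  have := hd.comm x z
  omega

/-- If the geodesics from `x` to `g • x` and to `g⁻¹ • x` share at least half of their length, then
`g` fixes the midpoint of `[x, g • x]`; as `g` inverts no edge, the midpoint is a vertex. -/
theorem fixedBy_nonempty_of_le {g : H} {x : V}
    (hg : d x (g • x) ≤ 2 * gromovProduct d x (g • x) (g⁻¹ • x)) : (fixedBy V g).Nonempty := by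
  have hc := hd.gromovProduct_le_right x (g • x) (g⁻¹ • x)
  obtain ⟨z, hxz, hz⟩ := hd.exists_gromovProduct_eq (x := x) (y := g⁻¹ • x)
    (n := (d x (g • x) + 1) / 2) (by omega)
  have hzg : (d x (g • x) + 1) / 2 ≤ gromovProduct d x z (g • x) :=
    hd.le_gromovProduct_trans hz.ge (hd.gromovProduct_comm .. ▸ (by omega))
  obtain ⟨hgz, hgzx⟩ := hd.smul_mem_geodesic (hz.trans hxz.symm)
  have hzgz : d x (g • z) ≤ gromovProduct d x z (g • z) :=
    hd.le_gromovProduct_trans (by omega) (hd.gromovProduct_comm .. ▸ hgzx.ge)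
  obtain hL | hL := Nat.even_or_odd (d x (g • x))
  · obtain ⟨m, hm⟩ := hL
    exact ⟨z, (hd.eq_of_le_gromovProduct (by omega) hzgz).symm⟩
  · have hgz' : gromovProduct d x (g • z) (g⁻¹ • x) = d x (g • z) := by
      refine le_antisymm (hd.gromovProduct_le_left ..) ?_
      exact hd.le_gromovProduct_trans hgzx.ge (by omega)
    obtain ⟨hggz, hggzx⟩ := hd.smul_mem_geodesic hgz'
    have hfix : g • g • z = z := by
      have : d x (g • g • z) ≤ gromovProduct d x (g • g • z) z :=
        hd.le_gromovProduct_trans hggzx.ge (hd.gromovProduct_comm .. ▸ (by omega))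
      exact hd.eq_of_le_gromovProduct this (by omega)
    have := hd.no_inversion g z hfix
    have := hd.two_mul_gromovProduct x z (g • z)
    grind

end IsIsolatedTreeAction

/-! ### Ping-pong on trees -/

/-- `a` and `b` freely generate a free group of permutations of `V`. -/
def ActFreely {H : Type*} (V : Type*) [Group H] [MulAction H V] (a b : H) : Prop :=
  Function.Injective (FreeGroup.lift ![toPermHom H V a, toPermHom H V b])

theorem actFreely_of_ping_pong {H V : Type*} [Group H] [MulAction H V] {a b : H}
    {A B : Set V} (hA : A.Nonempty) (hB : B.Nonempty) (hAB : Disjoint A B)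
    (ha : ∀ n : ℤ, n ≠ 0 → ∀ x ∈ B, a ^ n • x ∈ A)
    (hb : ∀ n : ℤ, n ≠ 0 → ∀ x ∈ A, b ^ n • x ∈ B) : ActFreely V a b := by
  refine injective_lift_pair_of_ping_pong hA hB hAB ?_ ?_
  all_goals simpa only [← map_zpow]

/-- The points `z` such that `[x, z]` shares more than `α` with `[x, g • x]` or more than `α'` with
`[x, g⁻¹ • x]`. For suitable `α` and `α'` it is a ping-pong set of `g`. -/
def attractor {H V : Type*} [Group H] [MulAction H V] (d : V → V → ℕ) (g : H) (x : V)
    (α α' : ℕ) : Set V :=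
  {z | α < gromovProduct d x z (g • x) ∨ α' < gromovProduct d x z (g⁻¹ • x)}

namespace IsIsolatedTreeAction

variable {H V : Type*} [Group H] [MulAction H V] {d : V → V → ℕ}
  (hd : IsIsolatedTreeAction H d)
include hd

theorem lt_gromovProduct_smul {g : H} {x z : V} {α α' : ℕ} (hα : α + α' < d x (g • x))
    (hz : gromovProduct d x z (g⁻¹ • x) ≤ α') : α < gromovProduct d x (g • z) (g • x) := by
  have := hd.gromovProduct_smul_add g x z
  omega

theorem lt_gromovProduct_pow_succ_smul {g : H} {x z : V} {α α' : ℕ} (hα : α + α' < d x (g • x))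
    (hc : gromovProduct d x (g • x) (g⁻¹ • x) ≤ min α α')
    (hz : gromovProduct d x z (g⁻¹ • x) ≤ α') (n : ℕ) :
    α < gromovProduct d x (g ^ (n + 1) • z) (g • x) := by
  induction n with
  | zero => simpa using hd.lt_gromovProduct_smul hα hz
  | succ n ih =>
    rw [pow_succ', mul_smul]
    refine hd.lt_gromovProduct_smul hα (not_lt.mp fun hlt => ?_)
    have : min α α' + 1 ≤ gromovProduct d x (g • x) (g⁻¹ • x) :=
      hd.le_gromovProduct_trans (hd.gromovProduct_comm .. ▸ (by omega))
        (show _ ≤ gromovProduct d x (g ^ (n + 1) • z) _ by omega)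
    omega

theorem zpow_smul_mem_attractor {g : H} {x z : V} {α α' : ℕ} (hα : α + α' < d x (g • x))
    (hc : gromovProduct d x (g • x) (g⁻¹ • x) ≤ min α α') (hz : z ∉ attractor d g x α α')
    {n : ℤ} (hn : n ≠ 0) : g ^ n • z ∈ attractor d g x α α' := by
  obtain ⟨hzg, hzg'⟩ : gromovProduct d x z (g • x) ≤ α ∧ gromovProduct d x z (g⁻¹ • x) ≤ α' := by
    simpa [attractor] using hz
  obtain ⟨m, rfl | rfl⟩ := n.eq_nat_or_neg
  all_goals obtain ⟨k, rfl⟩ := Nat.exists_eq_succ_of_ne_zero (n := m) (by simpa using hn)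
  · rw [zpow_natCast]
    exact .inl (hd.lt_gromovProduct_pow_succ_smul hα hc hzg' k)
  · rw [zpow_neg, zpow_natCast, ← inv_pow]
    refine .inr (hd.lt_gromovProduct_pow_succ_smul (α' := α) ?_ ?_ ?_ k)
    · rwa [hd.dist_inv_smul_self, add_comm]
    · rwa [inv_inv, hd.gromovProduct_comm, min_comm]
    · rwa [inv_inv]

theorem smul_self_mem_attractor {g : H} {x : V} {α α' : ℕ} (hα : α + α' < d x (g • x)) :
    g • x ∈ attractor d g x α α' :=
  .inl (hd.lt_gromovProduct_smul hα (hd.gromovProduct_self_left .. ▸ Nat.zero_le _))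

theorem gromovProduct_zpow_smul_eq_zero {a : H} {p q z : V} (hp : a • p = p)
    (hmin : ∀ p', a • p' = p' → d p q ≤ d p' q) {n : ℤ} (hn : n ≠ 0)
    (hz : 0 < gromovProduct d p z q) : gromovProduct d p (a ^ n • z) q = 0 := by
  by_contra hpos
  have hanq : 1 ≤ gromovProduct d p q (a ^ n • q) := by
    refine hd.le_gromovProduct_trans (z := a ^ n • z) ?_ ?_
    · rw [hd.gromovProduct_comm]; omega
    · rwa [hd.gromovProduct_smul_of_fixed (mem_fixedBy_zpow hp n)]
  have haq := hanq.trans (hd.gromovProduct_zpow_smul_le hn hp q)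
  obtain ⟨y, hpy, hyq⟩ := hd.exists_gromovProduct_eq (haq.trans (hd.gromovProduct_le_left ..))
  have hay := hd.smul_eq_of_le_gromovProduct hp (hpy.trans_le hyq.ge)
    (hpy.trans_le (hd.le_gromovProduct_trans hyq.ge haq))
  have := hmin y hay
  have := hd.two_mul_gromovProduct p y q
  omega

/-- Ping-pong between the two halves of the tree separated by the first edge of `[p, q]`, where `p`
and `q` are fixed vertices of `a` and `b` as close to each other as possible. -/
theorem actFreely_of_elliptic_of_elliptic {a b : H} (ha : (fixedBy V a).Nonempty)
    (hb : (fixedBy V b).Nonempty) (hab : ∀ x : V, a • x = x → b • x ≠ x) : ActFreely V a b := by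
  obtain ⟨⟨p, q⟩, ⟨hp : a • p = p, hq : b • q = q⟩, hmin⟩ := exists_minimalFor_of_wellFoundedLT
    (fun y : V × V => a • y.1 = y.1 ∧ b • y.2 = y.2) (fun y => d y.1 y.2)
    ⟨(ha.some, hb.some), ha.some_mem, hb.some_mem⟩
  have hminp (p') (hp' : a • p' = p') : d p q ≤ d p' q :=
    (le_total _ _).elim id fun h => hmin (j := (p', q)) ⟨hp', hq⟩ h
  have hminq (q') (hq' : b • q' = q') : d q p ≤ d q' p := by
    rw [hd.comm q, hd.comm q']
    exact (le_total _ _).elim id fun h => hmin (j := (p, q')) ⟨hp, hq'⟩ h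
  have hpq : 0 < d p q := Nat.pos_of_ne_zero fun h =>
    hab p hp (hd.eq_zero_iff.mp h ▸ hq)
  have hsum (z : V) := hd.gromovProduct_add_gromovProduct p q z
  refine actFreely_of_ping_pong (A := {z | gromovProduct d p z q = 0})
    (B := {z | 0 < gromovProduct d p z q}) ⟨p, hd.gromovProduct_self_left p q⟩
    ⟨q, hpq.trans_eq (hd.gromovProduct_self_right p q).symm⟩
    (Set.disjoint_left.mpr fun z hz hz' => hz'.ne' hz)
    (fun n hn z hz => hd.gromovProduct_zpow_smul_eq_zero hp hminp hn hz) fun n hn z hz => ?_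
  have hz' : 0 < gromovProduct d q z p := by
    have := hsum z
    change gromovProduct d p z q = 0 at hz
    omega
  have := hsum (b ^ n • z)
  have := hd.gromovProduct_zpow_smul_eq_zero hq hminq hn hz'
  change 0 < gromovProduct d p (b ^ n • z) q
  omega

theorem dist_smul_add_two_le {g : H} {x z : V} (hxz : d x z = 1)
    (hz : 1 ≤ gromovProduct d x z (g • x)) (hz' : 1 ≤ gromovProduct d x z (g⁻¹ • x))
    (hg : 2 ≤ d x (g • x)) : d z (g • z) + 2 ≤ d x (g • x) := by
  obtain ⟨hgz, hgzx⟩ := hd.smul_mem_geodesic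
    (le_antisymm (hd.gromovProduct_le_left ..) (hxz.trans_le hz'))
  have : 1 ≤ gromovProduct d x z (g • z) :=
    hd.le_gromovProduct_trans hz (hd.gromovProduct_comm .. ▸ (by omega))
  have := hd.two_mul_gromovProduct x z (g • z)
  omega

theorem exists_common_fixed_of_le {a b : H} {x : V} (hb : b • x = x)
    (hab : d x (a • x) ≤
      gromovProduct d x (a • x) (b • a • x) + gromovProduct d x (a⁻¹ • x) (b • a⁻¹ • x)) :
    ∃ z : V, b • z = z ∧ b • a • z = a • z := by
  obtain ⟨z, hxz, hz⟩ := hd.exists_gromovProduct_eq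
    (hd.gromovProduct_le_left x (a⁻¹ • x) (b • a⁻¹ • x))
  obtain ⟨haz, hazx⟩ := hd.smul_mem_geodesic (hz.trans hxz.symm)
  refine ⟨z, hd.smul_eq_of_le_gromovProduct hb (hxz.trans_le hz.ge)
      (hxz.trans_le (hd.le_gromovProduct_trans hz.ge le_rfl)),
    hd.smul_eq_of_le_gromovProduct hb hazx.ge (hd.le_gromovProduct_trans hazx.ge (by omega))⟩

variable {a b : H} {x : V} {α α' : ℕ}

theorem zpow_smul_notMem_attractor (hb : b • x = x)
    (hα : gromovProduct d x (a • x) (b • a • x) ≤ α)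
    (hα' : gromovProduct d x (a⁻¹ • x) (b • a⁻¹ • x) ≤ α')
    (hc : ∀ m : ℤ, gromovProduct d x (a⁻¹ • x) (b ^ m • a • x) ≤ min α α')
    {m : ℤ} (hm : m ≠ 0) {z : V} (hz : z ∈ attractor d a x α α') :
    b ^ m • z ∉ attractor d a x α α' := by
  have hbm (m : ℤ) : b ^ m • x = x := mem_fixedBy_zpow hb m
  have key {y y' : V} {n : ℕ} (hy : n ≤ gromovProduct d x z y)
      (hy' : n ≤ gromovProduct d x (b ^ m • z) y') :
      n ≤ gromovProduct d x y' (b ^ m • y) := by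
    refine hd.le_gromovProduct_trans (hy'.trans_eq (hd.gromovProduct_comm ..)) ?_
    rwa [hd.gromovProduct_smul_of_fixed (hbm m)]
  have hzpow := hd.gromovProduct_zpow_smul_le hm hb
  rintro (h' | h') <;> obtain h | h := hz
  · exact ((key h h').trans ((hzpow _).trans hα)).not_gt (Nat.lt_succ_self _)
  · have := key (n := min α α' + 1) (y := a⁻¹ • x) (y' := a • x) (by omega) (by omega)
    have hneg := hc (-m)
    rw [← hd.gromovProduct_smul_of_fixed (hbm m), ← mul_smul (b ^ m) (b ^ (-m)), ← zpow_add,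
      add_neg_cancel, zpow_zero, one_smul, hd.gromovProduct_comm] at hneg
    omega
  · have := key (n := min α α' + 1) (y := a • x) (y' := a⁻¹ • x) (by omega) (by omega)
    have := hc m
    omega
  · exact ((key h h').trans ((hzpow _).trans hα')).not_gt (Nat.lt_succ_self _)

theorem actFreely_of_fixed (hb : b • x = x)
    (hα : gromovProduct d x (a • x) (b • a • x) ≤ α)
    (hα' : gromovProduct d x (a⁻¹ • x) (b • a⁻¹ • x) ≤ α')
    (hc : ∀ m : ℤ, gromovProduct d x (a⁻¹ • x) (b ^ m • a • x) ≤ min α α')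
    (hsum : α + α' < d x (a • x)) : ActFreely V a b := by
  have hc0 : gromovProduct d x (a • x) (a⁻¹ • x) ≤ min α α' := by
    simpa [hd.gromovProduct_comm x (a • x)] using hc 0
  refine actFreely_of_ping_pong ⟨a • x, hd.smul_self_mem_attractor hsum⟩ ⟨x, ?_⟩
    disjoint_compl_right (fun n hn z hz => hd.zpow_smul_mem_attractor hsum hc0 hz hn)
    (fun m hm z hz => hd.zpow_smul_notMem_attractor hb hα hα' hc hm hz)
  simp [attractor, hd.gromovProduct_self_left]

/-- Otherwise the neighbour of `x` on `[x, a • x]` is again fixed by `b`, and `a` moves it less far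
than `x`. -/
theorem gromovProduct_inv_smul_zpow_smul_eq_zero (hb : b • x = x)
    (hmin : ∀ y, b • y = y → d x (a • x) ≤ d y (a • y))
    (hpos : 0 < gromovProduct d x (a • x) (b • a • x) ∨
      0 < gromovProduct d x (a⁻¹ • x) (b • a⁻¹ • x))
    {m : ℤ} (hm : 2 * gromovProduct d x (a⁻¹ • x) (b ^ m • a • x) < d x (a • x)) :
    gromovProduct d x (a⁻¹ • x) (b ^ m • a • x) = 0 := by
  by_contra hne
  have hone : 1 ≤ gromovProduct d x (a⁻¹ • x) (b ^ m • a • x) := Nat.one_le_iff_ne_zero.mpr hne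
  have ha : 2 ≤ d x (a • x) := by omega
  obtain ⟨z, hxz, hbz, hz, hz'⟩ : ∃ z, d x z = 1 ∧ b • z = z ∧
      1 ≤ gromovProduct d x z (a • x) ∧ 1 ≤ gromovProduct d x z (a⁻¹ • x) := by
    have hfix {y z : V} (hy : 0 < gromovProduct d x y (b • y)) (hxz : d x z = 1)
        (hz : gromovProduct d x z y = 1) : b • z = z :=
      hd.smul_eq_of_le_gromovProduct hb (hxz.trans_le hz.ge)
        (hxz.trans_le (hd.le_gromovProduct_trans hz.ge hy))
    have hmove {z : V} (hbz : b • z = z) (y : V) :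
        gromovProduct d x z (b ^ m • y) = gromovProduct d x z y := by
      conv_lhs => rw [← show b ^ m • z = z from mem_fixedBy_zpow hbz m]
      exact hd.gromovProduct_smul_of_fixed (mem_fixedBy_zpow hb m) z y
    obtain hpos | hpos := hpos
    · obtain ⟨z, hxz, hz⟩ := hd.exists_gromovProduct_eq (one_le_two.trans ha)
      have hbz := hfix hpos hxz hz
      refine ⟨z, hxz, hbz, hz.ge, hd.le_gromovProduct_trans (z := b ^ m • a • x) ?_ ?_⟩
      · rw [hmove hbz, hz]
      · rwa [hd.gromovProduct_comm]
    · obtain ⟨z, hxz, hz⟩ := hd.exists_gromovProduct_eq (x := x) (y := a⁻¹ • x) (n := 1)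
        (by rw [hd.dist_inv_smul_self]; omega)
      have hbz := hfix hpos hxz hz
      refine ⟨z, hxz, hbz, ?_, hz.ge⟩
      rw [← hmove hbz]
      exact hd.le_gromovProduct_trans hz.ge hone
  have := hd.dist_smul_add_two_le hxz hz hz' ha
  have := hmin z hbz
  omega

theorem actFreely_of_elliptic_of_not_elliptic (hb : (fixedBy V b).Nonempty)
    (hell : ∀ m : ℤ, ¬ (fixedBy V (b ^ m * a)).Nonempty) (hab : ∀ y : V, ⁅a, b⁆ • y ≠ y) :
    ActFreely V a b := by
  obtain ⟨x, hx, hmin⟩ := exists_minimalFor_of_wellFoundedLT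
    (fun y : V => b • y = y) (fun y => d y (a • y)) hb
  have hmin' (y) (hy : b • y = y) : d x (a • x) ≤ d y (a • y) :=
    (le_total _ _).elim id fun h => hmin hy h
  have hbm (m : ℤ) : b ^ m • x = x := mem_fixedBy_zpow hx m
  have hc (m : ℤ) : 2 * gromovProduct d x (a⁻¹ • x) (b ^ m • a • x) < d x (a • x) := by
    have hinv : (b ^ m * a)⁻¹ • x = a⁻¹ • x := by
      rw [mul_inv_rev, mul_smul, inv_smul_eq_iff.mpr (hbm m).symm]
    have hL : d x ((b ^ m * a) • x) = d x (a • x) := by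
      rw [mul_smul]
      calc d x (b ^ m • a • x) = d (b ^ m • x) (b ^ m • a • x) := by rw [hbm]
        _ = d x (a • x) := hd.dist_smul ..
    have := mt (hd.fixedBy_nonempty_of_le (x := x)) (hell m)
    rwa [hinv, hL, hd.gromovProduct_comm, mul_smul, not_le] at this
  have hsum : gromovProduct d x (a • x) (b • a • x) +
      gromovProduct d x (a⁻¹ • x) (b • a⁻¹ • x) < d x (a • x) := by
    refine not_le.mp fun hle => ?_
    obtain ⟨z, hbz, hbaz⟩ := hd.exists_common_fixed_of_le hx hle
    refine hab (a • z) ?_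
    rw [commutatorElement_def, mul_smul, mul_smul, mul_smul, inv_smul_eq_iff.mpr hbaz.symm,
      inv_smul_smul, hbz]
  by_cases hpos : 0 < gromovProduct d x (a • x) (b • a • x) ∨
      0 < gromovProduct d x (a⁻¹ • x) (b • a⁻¹ • x)
  · exact hd.actFreely_of_fixed hx le_rfl le_rfl (fun m =>
      (hd.gromovProduct_inv_smul_zpow_smul_eq_zero hx hmin' hpos (hc m)).trans_le (Nat.zero_le _))
      hsum
  · exact hd.actFreely_of_fixed (α := (d x (a • x) - 1) / 2) (α' := (d x (a • x) - 1) / 2) hx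
      (by omega) (by omega) (fun m => by have := hc m; omega) (by omega)

end IsIsolatedTreeAction

/-- `{a, b}` generates the group `H`. -/
abbrev IsGeneratingPair {H : Type*} [Group H] (a b : H) : Prop :=
  Subgroup.closure {a, b} = ⊤

namespace IsGeneratingPair

variable {H : Type*} [Group H] {a b p q : H}

theorem of_mem (h : IsGeneratingPair a b) (ha : a ∈ Subgroup.closure {p, q})
    (hb : b ∈ Subgroup.closure {p, q}) : IsGeneratingPair p q := by
  refine top_le_iff.mp (h ▸ (Subgroup.closure_le _).mpr ?_)
  rintro _ (rfl | rfl)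
  exacts [ha, hb]

theorem left_mem : a ∈ Subgroup.closure {a, b} := Subgroup.subset_closure (.inl rfl)

theorem right_mem : b ∈ Subgroup.closure {a, b} := Subgroup.subset_closure (.inr rfl)

theorem symm (h : IsGeneratingPair a b) : IsGeneratingPair b a :=
  h.of_mem right_mem left_mem

theorem inv_left (h : IsGeneratingPair a b) : IsGeneratingPair a⁻¹ b :=
  h.of_mem (inv_mem_iff.mp left_mem) right_mem

theorem zpow_mul_left (h : IsGeneratingPair a b) (m : ℤ) : IsGeneratingPair (b ^ m * a) b :=
  h.of_mem ((Subgroup.mul_mem_cancel_left _ (zpow_mem right_mem m)).mp left_mem) right_mem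

theorem inv_mul_right (h : IsGeneratingPair a b) : IsGeneratingPair a (a⁻¹ * b) :=
  h.of_mem left_mem ((Subgroup.mul_mem_cancel_left _ (inv_mem left_mem)).mp right_mem)

theorem lift_surjective (h : IsGeneratingPair a b) :
    Function.Surjective (FreeGroup.lift ![a, b]) := by
  rw [← MonoidHom.range_eq_top, FreeGroup.range_lift_eq_closure]
  simpa using h.symm

end IsGeneratingPair

/-- A generating pair `a`, `b` and a base vertex `x` that minimise the total displacement
`d x (a • x) + d x (b • x)`. -/
structure IsShortest {H V : Type*} [Group H] [MulAction H V] (d : V → V → ℕ) (a b : H) (x : V) :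
    Prop where
  generates : IsGeneratingPair a b
  le : ∀ {p q : H} (y : V), IsGeneratingPair p q →
    d x (a • x) + d x (b • x) ≤ d y (p • y) + d y (q • y)

namespace IsShortest

variable {H V : Type*} [Group H] [MulAction H V] {d : V → V → ℕ} {a b : H} {x : V}

theorem symm (h : IsShortest d a b x) : IsShortest d b a x :=
  ⟨h.generates.symm, fun y hpq => add_comm (d x (a • x)) _ ▸ h.le y hpq⟩

theorem inv_left (h : IsShortest d a b x) (hd : IsIsolatedTreeAction H d) :
    IsShortest d a⁻¹ b x :=
  ⟨h.generates.inv_left, fun y hpq => (hd.dist_inv_smul_self a x).symm ▸ h.le y hpq⟩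

theorem inv_right (h : IsShortest d a b x) (hd : IsIsolatedTreeAction H d) :
    IsShortest d a b⁻¹ x :=
  (h.symm.inv_left hd).symm

theorem two_mul_gromovProduct_le (h : IsShortest d a b x) (hd : IsIsolatedTreeAction H d) :
    2 * gromovProduct d x (a • x) (b • x) ≤ d x (a • x) := by
  have := h.le x h.generates.inv_mul_right
  rw [mul_smul, hd.dist_inv_smul] at this
  have := hd.two_mul_gromovProduct x (a • x) (b • x)
  omega

/-- Otherwise the base vertex halfway from `x` to `a⁻¹ • x`, with the pair `a`, `a⁻¹ * b`, has a
smaller displacement. -/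
theorem not_half_overlap (h : IsShortest d a b x) (hd : IsIsolatedTreeAction H d)
    (ha : a • x ≠ x) : ¬ (2 * gromovProduct d x (a • x) (b • x) = d x (a • x) ∧
      2 * gromovProduct d x (a⁻¹ • x) (b⁻¹ • x) = d x (a • x)) := by
  rintro ⟨hab, hab'⟩
  obtain ⟨y, hxy, hy⟩ := hd.exists_gromovProduct_eq
    (hd.gromovProduct_le_left x (a⁻¹ • x) (b⁻¹ • x))
  obtain ⟨hay, hayx⟩ := hd.smul_mem_geodesic (hy.trans hxy.symm)
  obtain ⟨hby, hbyx⟩ := hd.smul_mem_geodesic (g := b) (x := x) (z := y) <|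
    le_antisymm (hd.gromovProduct_le_left ..)
      (hxy.trans_le (hd.le_gromovProduct_trans hy.ge le_rfl))
  have hb := h.symm.two_mul_gromovProduct_le hd
  rw [hd.gromovProduct_comm] at hb
  have haby : d x (a • y) ≤ gromovProduct d x (a • y) (b • y) := by
    refine hd.le_gromovProduct_trans hayx.ge (hd.le_gromovProduct_trans (z := b • x) (by omega) ?_)
    rw [hd.gromovProduct_comm]
    omega
  have hshort := h.le y h.generates.inv_mul_right
  rw [mul_smul, hd.dist_inv_smul] at hshort
  have := hd.two_mul_gromovProduct x (a • y) (b • y)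
  have := hd.triangle y x (a • y)
  have := hd.comm y x
  have : d x (a • x) ≠ 0 := fun h0 => ha (hd.eq_zero_iff.mp h0).symm
  omega

theorem exists_thresholds (h : IsShortest d a b x) (hd : IsIsolatedTreeAction H d)
    (ha : ¬ (fixedBy V a).Nonempty) :
    ∃ α α' : ℕ, α + α' < d x (a • x) ∧ gromovProduct d x (a • x) (a⁻¹ • x) ≤ min α α' ∧
      gromovProduct d x (a • x) (b • x) ≤ α ∧ gromovProduct d x (a • x) (b⁻¹ • x) ≤ α ∧
      gromovProduct d x (a⁻¹ • x) (b • x) ≤ α' ∧ gromovProduct d x (a⁻¹ • x) (b⁻¹ • x) ≤ α' := by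
  have hax : a • x ≠ x := fun hax => ha ⟨x, hax⟩
  have haa := mt (hd.fixedBy_nonempty_of_le (x := x)) ha
  have h₁ := h.two_mul_gromovProduct_le hd
  have h₂ := (h.inv_right hd).two_mul_gromovProduct_le hd
  have h₃ := (h.inv_left hd).two_mul_gromovProduct_le hd
  have h₄ := ((h.inv_left hd).inv_right hd).two_mul_gromovProduct_le hd
  rw [hd.dist_inv_smul_self] at h₃ h₄
  have h₁₄ := h.not_half_overlap hd hax
  have h₂₃ := (h.inv_right hd).not_half_overlap hd hax
  rw [inv_inv] at h₂₃
  have hsep (g : H) (n : ℕ) (hn : n ≤ gromovProduct d x (a • x) (g • x))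
      (hn' : n ≤ gromovProduct d x (a⁻¹ • x) (g • x)) :
      n ≤ gromovProduct d x (a • x) (a⁻¹ • x) :=
    hd.le_gromovProduct_trans hn (hn'.trans_eq (hd.gromovProduct_comm ..))
  have h₁₃ := hsep b _ (min_le_left _ _) (min_le_right _ _)
  have h₂₄ := hsep b⁻¹ _ (min_le_left _ _) (min_le_right _ _)
  refine ⟨max (gromovProduct d x (a • x) (a⁻¹ • x))
      (max (gromovProduct d x (a • x) (b • x)) (gromovProduct d x (a • x) (b⁻¹ • x))),
    max (gromovProduct d x (a • x) (a⁻¹ • x))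
      (max (gromovProduct d x (a⁻¹ • x) (b • x)) (gromovProduct d x (a⁻¹ • x) (b⁻¹ • x))),
    ?_, ?_, ?_, ?_, ?_, ?_⟩ <;> omega

theorem actFreely (h : IsShortest d a b x) (hd : IsIsolatedTreeAction H d)
    (ha : ¬ (fixedBy V a).Nonempty) (hb : ¬ (fixedBy V b).Nonempty) : ActFreely V a b := by
  obtain ⟨α, α', hα, haa, h₁, h₂, h₃, h₄⟩ := h.exists_thresholds hd ha
  obtain ⟨β, β', hβ, hbb, k₁, k₂, k₃, k₄⟩ := h.symm.exists_thresholds hd hb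
  have hdisj : Disjoint (attractor d a x α α') (attractor d b x β β') := by
    refine Set.disjoint_left.mpr fun z hza hzb => ?_
    have key {s t : H} {γ δ : ℕ} (hs : γ < gromovProduct d x z (s • x))
        (ht : δ < gromovProduct d x z (t • x)) (hst : gromovProduct d x (s • x) (t • x) ≤ γ)
        (hts : gromovProduct d x (t • x) (s • x) ≤ δ) : False := by
      have : min γ δ + 1 ≤ gromovProduct d x (s • x) (t • x) :=
        hd.le_gromovProduct_trans (z := z) (hd.gromovProduct_comm .. ▸ (by omega)) (by omega)
      rw [hd.gromovProduct_comm] at hts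
      omega
    obtain hza | hza := hza <;> obtain hzb | hzb := hzb
    · exact key hza hzb h₁ k₁
    · exact key hza hzb h₂ k₃
    · exact key hza hzb h₃ k₂
    · exact key hza hzb h₄ k₄
  exact actFreely_of_ping_pong ⟨_, hd.smul_self_mem_attractor hα⟩
    ⟨_, hd.smul_self_mem_attractor hβ⟩ hdisj
    (fun n hn z hz => hd.zpow_smul_mem_attractor hα haa (Set.disjoint_right.mp hdisj hz) hn)
    (fun n hn z hz => hd.zpow_smul_mem_attractor hβ hbb (Set.disjoint_left.mp hdisj hz) hn)

end IsShortest

namespace IsIsolatedTreeAction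

variable {H V : Type*} [Group H] [MulAction H V] {d : V → V → ℕ}

theorem exists_actFreely [Nonempty V] (hd : IsIsolatedTreeAction H d) {a b : H}
    (hab : IsGeneratingPair a b)
    (hcomm : ∀ p q : H, IsGeneratingPair p q → ∀ x : V, ⁅p, q⁆ • x ≠ x) :
    ∃ p q : H, IsGeneratingPair p q ∧ ActFreely V p q := by
  by_cases hell : ∃ p q : H, IsGeneratingPair p q ∧ (fixedBy V q).Nonempty
  · obtain ⟨p, q, hpq, hq⟩ := hell
    by_cases hp : ∃ m : ℤ, (fixedBy V (q ^ m * p)).Nonempty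
    · obtain ⟨m, hp⟩ := hp
      have hpq' := hpq.zpow_mul_left m
      refine ⟨_, _, hpq', hd.actFreely_of_elliptic_of_elliptic hp hq fun x hpx hqx => ?_⟩
      refine hcomm _ _ hpq' x ?_
      rw [commutatorElement_def, mul_smul, mul_smul, mul_smul, inv_smul_eq_iff.mpr hqx.symm,
        inv_smul_eq_iff.mpr hpx.symm, hqx, hpx]
    · exact ⟨p, q, hpq,
        hd.actFreely_of_elliptic_of_not_elliptic hq (not_exists.mp hp) (hcomm p q hpq)⟩
  · push Not at hell
    obtain ⟨⟨p, q, x⟩, hpq : IsGeneratingPair p q, hmin⟩ := exists_minimalFor_of_wellFoundedLT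
      (fun t : H × H × V => IsGeneratingPair t.1 t.2.1)
      (fun t => d t.2.2 (t.1 • t.2.2) + d t.2.2 (t.2.1 • t.2.2))
      ⟨(a, b, Classical.arbitrary V), hab⟩
    have hshort : IsShortest d p q x :=
      ⟨hpq, fun {p' q'} y hpq' => (le_total _ _).elim id fun h => hmin (j := (p', q', y)) hpq' h⟩
    exact ⟨p, q, hpq, hshort.actFreely hd (Set.not_nonempty_iff_eq_empty.mpr (hell q p hpq.symm))
      (Set.not_nonempty_iff_eq_empty.mpr (hell p q hpq))⟩

theorem toPermHom_injective [Nonempty V] (hd : IsIsolatedTreeAction H d) {a b : H}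
    (hab : IsGeneratingPair a b)
    (hcomm : ∀ p q : H, IsGeneratingPair p q → ∀ x : V, ⁅p, q⁆ • x ≠ x) :
    Function.Injective (toPermHom H V) := by
  obtain ⟨p, q, hpq, hfree⟩ := hd.exists_actFreely hab hcomm
  refine Function.Injective.of_comp_right ?_ hpq.lift_surjective
  rwa [← MonoidHom.coe_comp, comp_lift_pair]

end IsIsolatedTreeAction

/-! ### The Cayley tree of a free group -/

section Words

variable {X Y : Type*}

theorem exists_common_prefix (l l' : List X) : ∃ p s t, l = p ++ s ∧ l' = p ++ t ∧
    ∀ x ∈ s.head?, ∀ y ∈ t.head?, x ≠ y := by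
  induction l generalizing l' with
  | nil => exact ⟨[], [], l', by simp⟩
  | cons x l ih =>
    cases l' with
    | nil => exact ⟨[], x :: l, [], by simp⟩
    | cons y l' =>
      by_cases hxy : x = y
      · obtain ⟨p, s, t, rfl, rfl, hst⟩ := ih l'
        exact ⟨x :: p, s, t, rfl, by simp [hxy], hst⟩
      · exact ⟨[], x :: l, y :: l', by simpa using hxy⟩

theorem inv_mk_append_mul_mk_append (p s t : List (X × Bool)) :
    (FreeGroup.mk (p ++ s))⁻¹ * FreeGroup.mk (p ++ t) = FreeGroup.mk (FreeGroup.invRev s ++ t) := by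
  simp [← FreeGroup.mul_mk, ← FreeGroup.inv_mk, mul_assoc]

variable [DecidableEq X] [DecidableEq Y]

theorem norm_mk_of_isReduced {w : List (X × Bool)} (hw : FreeGroup.IsReduced w) :
    (FreeGroup.mk w).norm = w.length := by
  rw [FreeGroup.norm, FreeGroup.toWord_mk, hw.reduce_eq]

theorem toWord_map_of_injective {f : X → Y} (hf : Function.Injective f) (g : FreeGroup X) :
    (FreeGroup.map f g).toWord = g.toWord.map fun l => (f l.1, l.2) := by
  conv_lhs => rw [← FreeGroup.mk_toWord (x := g), FreeGroup.map.mk, FreeGroup.toWord_mk]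
  refine FreeGroup.IsReduced.reduce_eq ?_
  rw [FreeGroup.IsReduced, List.isChain_map]
  exact (FreeGroup.isReduced_toWord (x := g)).imp fun _ _ h hab => h (hf hab)

theorem map_eq_self_iff {f : X → X} (hf : Function.Injective f) {g : FreeGroup X} :
    FreeGroup.map f g = g ↔ ∀ l ∈ g.toWord, f l.1 = l.1 := by
  rw [← FreeGroup.toWord_inj, toWord_map_of_injective hf]
  conv_lhs => rhs; rw [← List.map_id g.toWord]
  simp only [List.map_inj_left, id, Prod.ext_iff, and_true]

theorem even_norm_of_map_eq_inv {f : X → X} (hf : Function.Injective f) {g : FreeGroup X}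
    (hg : FreeGroup.map f g = g⁻¹) : Even g.norm := by
  have hcount : (g.toWord.map fun l => (f l.1, l.2)).countP (·.2) =
      (FreeGroup.invRev g.toWord).countP (·.2) := by
    rw [← toWord_map_of_injective hf, hg, FreeGroup.toWord_inv]
  rw [FreeGroup.invRev, List.countP_reverse, List.countP_map, List.countP_map] at hcount
  refine ⟨g.toWord.countP (·.2), ?_⟩
  rw [FreeGroup.norm, List.length_eq_countP_add_countP (·.2)]
  congr 1
  simpa [Function.comp_def] using hcount.symm

theorem norm_inv_mul_le {g h : FreeGroup X} {p : List (X × Bool)} (hg : p <+: g.toWord)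
    (hh : p <+: h.toWord) : (g⁻¹ * h).norm + 2 * p.length ≤ g.norm + h.norm := by
  obtain ⟨s, hs⟩ := hg
  obtain ⟨t, ht⟩ := hh
  have hle := FreeGroup.norm_mk_le (L₁ := FreeGroup.invRev s ++ t)
  rw [← inv_mk_append_mul_mk_append p, hs, ht, FreeGroup.mk_toWord, FreeGroup.mk_toWord,
    List.length_append, FreeGroup.invRev_length] at hle
  rw [FreeGroup.norm.eq_1 g, FreeGroup.norm.eq_1 h, ← hs, ← ht, List.length_append,
    List.length_append]
  omega

theorem exists_prefix_norm_inv_mul_eq (g h : FreeGroup X) : ∃ p, p <+: g.toWord ∧ p <+: h.toWord ∧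
    (g⁻¹ * h).norm + 2 * p.length = g.norm + h.norm := by
  obtain ⟨p, s, t, hs, ht, hst⟩ := exists_common_prefix g.toWord h.toWord
  have hred : FreeGroup.IsReduced (FreeGroup.invRev s ++ t) := by
    have hs_red : FreeGroup.IsReduced s :=
      FreeGroup.isReduced_toWord.infix (hs ▸ (List.suffix_append p s).isInfix)
    have ht_red : FreeGroup.IsReduced t :=
      FreeGroup.isReduced_toWord.infix (ht ▸ (List.suffix_append p t).isInfix)
    have hs_inv : FreeGroup.IsReduced (FreeGroup.invRev s) := by
      rw [FreeGroup.isReduced_iff_reduce_eq, FreeGroup.reduce_invRev, hs_red.reduce_eq]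
    refine List.isChain_append.mpr ⟨hs_inv, ht_red, ?_⟩
    rintro ⟨x, ε⟩ hx ⟨y, δ⟩ hy (rfl : x = y)
    have hx' : (x, !ε) ∈ s.head? := by
      rw [FreeGroup.invRev, List.getLast?_reverse, List.head?_map] at hx
      obtain ⟨⟨z, ε'⟩, hz, h⟩ := Option.mem_map.mp hx
      obtain ⟨rfl, rfl⟩ := Prod.mk.inj h
      simpa using hz
    simpa using hst _ hx' _ hy
  have hnorm := norm_mk_of_isReduced hred
  rw [← inv_mk_append_mul_mk_append p, ← hs, ← ht, FreeGroup.mk_toWord, FreeGroup.mk_toWord,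
    List.length_append, FreeGroup.invRev_length] at hnorm
  refine ⟨p, ⟨s, hs.symm⟩, ⟨t, ht.symm⟩, ?_⟩
  rw [FreeGroup.norm.eq_1 g, FreeGroup.norm.eq_1 h, hs, ht, List.length_append,
    List.length_append]
  omega

end Words

/-- The distance in the Cayley tree of the free group on `X`. -/
def cayleyDist {X : Type*} [DecidableEq X] (g h : FreeGroup X) : ℕ := (g⁻¹ * h).norm

section CayleyTree

variable {X : Type*} [DecidableEq X]

theorem cayleyDist_mul_left (k g h : FreeGroup X) :
    cayleyDist (k * g) (k * h) = cayleyDist g h := by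
  rw [cayleyDist, cayleyDist, mul_inv_rev, mul_assoc, inv_mul_cancel_left]

theorem cayleyDist_comm (g h : FreeGroup X) : cayleyDist g h = cayleyDist h g := by
  rw [cayleyDist, cayleyDist, ← FreeGroup.norm_inv_eq, mul_inv_rev, inv_inv]

theorem cayleyDist_four_point_one (y z w : FreeGroup X) :
    y.norm + cayleyDist z w ≤ max (z.norm + cayleyDist y w) (w.norm + cayleyDist y z) := by
  obtain ⟨p, hpz, hpy, hp⟩ := exists_prefix_norm_inv_mul_eq y z
  obtain ⟨q, hqz, hqw, hq⟩ := exists_prefix_norm_inv_mul_eq y w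
  obtain hpq | hqp := List.prefix_or_prefix_of_prefix hpz hqz
  · have := norm_inv_mul_le hpy (hpq.trans hqw)
    simp only [cayleyDist]
    omega
  · have := norm_inv_mul_le (hqp.trans hpy) hqw
    simp only [cayleyDist]
    omega

theorem isTreeDist_cayleyDist : IsTreeDist (cayleyDist (X := X)) where
  eq_zero_iff := by simp [cayleyDist, inv_mul_eq_one]
  comm := cayleyDist_comm
  four_point x y z w := by
    have h := cayleyDist_four_point_one (x⁻¹ * y) (x⁻¹ * z) (x⁻¹ * w)
    simp only [cayleyDist_mul_left] at h
    exact h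
  even_perimeter x y z := by
    obtain ⟨p, -, -, hp⟩ := exists_prefix_norm_inv_mul_eq (x⁻¹ * y) (x⁻¹ * z)
    have hyz := cayleyDist_mul_left x⁻¹ y z
    rw [cayleyDist_comm z x]
    simp only [cayleyDist] at *
    grind
  exists_between {x y n} hn := by
    have hred := FreeGroup.isReduced_toWord (x := x⁻¹ * y)
    have hsplit : x⁻¹ * y = FreeGroup.mk ((x⁻¹ * y).toWord.take n) *
        FreeGroup.mk ((x⁻¹ * y).toWord.drop n) := by
      rw [FreeGroup.mul_mk, List.take_append_drop, FreeGroup.mk_toWord]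
    refine ⟨x * FreeGroup.mk ((x⁻¹ * y).toWord.take n), ?_, ?_⟩
    · rw [cayleyDist, inv_mul_cancel_left, norm_mk_of_isReduced (hred.take n), List.length_take]
      exact min_eq_left hn
    · rw [cayleyDist, mul_inv_rev, mul_assoc, inv_mul_eq_iff_eq_mul.mpr hsplit,
        norm_mk_of_isReduced (hred.drop n), List.length_drop]
      exact Nat.add_sub_of_le hn

end CayleyTree

section PermSemidirect

variable {K X : Type*} [Group K] [MulAction K X]

variable (K X) in
/-- The action of `K` on the free group on `X` that permutes the free generators. -/
def freeGroupMulAut : K →* MulAut (FreeGroup X) where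
  toFun k := FreeGroup.freeGroupCongr (toPerm k)
  map_one' := by
    ext g : 1
    induction g using FreeGroup.induction_on <;> simp_all
  map_mul' k l := by
    ext g : 1
    induction g using FreeGroup.induction_on <;> simp_all [mul_smul]

theorem freeGroupMulAut_apply (k : K) (g : FreeGroup X) :
    freeGroupMulAut K X k g = FreeGroup.map (k • ·) g := rfl

@[simp]
theorem freeGroupMulAut_of (k : K) (x : X) :
    freeGroupMulAut K X k (FreeGroup.of x) = FreeGroup.of (k • x) := rfl

variable (K X) in
/-- The semidirect product of the free group on `X` by a group `K` permuting the free generators. -/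
abbrev PermSemidirect := FreeGroup X ⋊[freeGroupMulAut K X] K

/-- The translation action on the cosets of `K`, which are identified with `FreeGroup X`. -/
instance : MulAction (PermSemidirect K X) (FreeGroup X) where
  smul q g := q.left * freeGroupMulAut K X q.right g
  one_smul g := by
    change (1 : FreeGroup X) * freeGroupMulAut K X 1 g = g
    simp
  mul_smul p q g := by
    change (p * q).left * freeGroupMulAut K X (p * q).right g =
      p.left * freeGroupMulAut K X p.right (q.left * freeGroupMulAut K X q.right g)
    simp [mul_assoc]

theorem PermSemidirect.smul_def (q : PermSemidirect K X) (g : FreeGroup X) :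
    q • g = q.left * freeGroupMulAut K X q.right g := rfl

theorem PermSemidirect.smul_mul (q : PermSemidirect K X) (g h : FreeGroup X) :
    q • (g * h) = q • g * freeGroupMulAut K X q.right h := by
  rw [smul_def, smul_def, map_mul, mul_assoc]

theorem freeGroupMulAut_zpow_eq_self
    (hX : ∀ {k : K} {n : ℤ}, n ≠ 0 → fixedBy X (k ^ n) ⊆ fixedBy X k) {k : K} {n : ℤ} (hn : n ≠ 0)
    {g : FreeGroup X} (hg : freeGroupMulAut K X (k ^ n) g = g) : freeGroupMulAut K X k g = g := by
  classical
  rw [freeGroupMulAut_apply, map_eq_self_iff (MulAction.injective _)] at hg ⊢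
  exact fun l hl => hX hn (hg l hl)

theorem isIsolatedTreeAction_cayleyDist [DecidableEq X]
    (hX : ∀ {k : K} {n : ℤ}, n ≠ 0 → fixedBy X (k ^ n) ⊆ fixedBy X k) :
    IsIsolatedTreeAction (PermSemidirect K X) (cayleyDist (X := X)) where
  toIsTreeDist := isTreeDist_cayleyDist
  dist_smul q g h := by
    rw [PermSemidirect.smul_def, PermSemidirect.smul_def, cayleyDist_mul_left, cayleyDist,
      cayleyDist, ← map_inv, ← map_mul, freeGroupMulAut_apply, FreeGroup.norm,
      toWord_map_of_injective (MulAction.injective _), List.length_map, FreeGroup.norm]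
  no_inversion q g hq := by
    refine even_norm_of_map_eq_inv (MulAction.injective q.right) ?_
    have h := PermSemidirect.smul_mul q g (g⁻¹ * q • g)
    rw [mul_inv_cancel_left, hq] at h
    rw [← freeGroupMulAut_apply, mul_inv_rev, inv_inv]
    exact eq_inv_mul_of_mul_eq h.symm
  fixedBy_zpow_subset {q n} := by
    rintro ⟨g, hg : q • g = g⟩ hn h (hh : q ^ n • h = h)
    have hgn : q ^ n • g = g := zpow_mem (K := stabilizer _ g) hg n
    rw [← mul_inv_cancel_left g h, PermSemidirect.smul_mul, hgn, mul_right_inj] at hh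
    change q • h = h
    rw [← mul_inv_cancel_left g h, PermSemidirect.smul_mul, hg,
      freeGroupMulAut_zpow_eq_self hX hn]
    rwa [← SemidirectProduct.rightHom_eq_right, map_zpow] at hh

end PermSemidirect

section FreePairs

variable {G H : Type*} [Group G] [Group H]

theorem IsGeneratingPair.commute_map {a b : H} (h : IsGeneratingPair a b) (f : H →* G)
    (hab : Commute (f a) (f b)) (x y : H) : Commute (f x) (f y) := by
  have hmem (z : H) : f z ∈ Subgroup.closure {f a, f b} := by
    rw [← Set.image_pair, ← MonoidHom.map_closure, h]
    exact Subgroup.mem_map_of_mem f (Subgroup.mem_top z)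
  have hcomm := Subgroup.isMulCommutative_closure (k := {f a, f b}) <| by
    rintro _ (rfl | rfl) _ (rfl | rfl)
    exacts [rfl, hab, hab.symm, rfl]
  exact congrArg Subtype.val (hcomm.is_comm.comm ⟨f x, hmem x⟩ ⟨f y, hmem y⟩)

theorem isGeneratingPair_freeGroup_of :
    IsGeneratingPair (FreeGroup.of 0 : FreeGroup (Fin 2)) (FreeGroup.of 1) := by
  rw [IsGeneratingPair, ← FreeGroup.closure_range_of (Fin 2)]
  congr 1
  ext
  simp [eq_comm]

theorem lift_pair_injective_of_map (φ : G →* H) {a b : G}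
    (h : Function.Injective (FreeGroup.lift ![φ a, φ b])) :
    Function.Injective (FreeGroup.lift ![a, b]) := by
  rw [← comp_lift_pair, MonoidHom.coe_comp] at h
  exact h.of_comp

variable (G) in
/-- Any two elements of `G` either commute or freely generate a free group of rank two. -/
def NoncommutingPairsFree : Prop :=
  ∀ ⦃a b : G⦄, ¬Commute a b → Function.Injective (FreeGroup.lift ![a, b])

theorem NoncommutingPairsFree.of_injective (h : NoncommutingPairsFree H) {φ : G →* H}
    (hφ : Function.Injective φ) : NoncommutingPairsFree G :=
  fun _ _ hab => lift_pair_injective_of_map φ (h fun hc => hab (hc.of_map hφ))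

theorem NoncommutingPairsFree.isMulTorsionFree (h : NoncommutingPairsFree G)
    (htf : ∀ (g : G) (n : ℕ), n ≠ 0 → g ^ n = 1 → g = 1) : IsMulTorsionFree G where
  pow_left_injective n hn a b (hab : a ^ n = b ^ n) := by
    by_cases hc : Commute a b
    · refine mul_inv_eq_one.mp (htf _ n hn ?_)
      rw [hc.inv_right.mul_pow, inv_pow, hab, mul_inv_cancel]
    · have hpow : (FreeGroup.of 0 : FreeGroup (Fin 2)) ^ n = FreeGroup.of 1 ^ n :=
        h hc (by simpa using hab)
      exact absurd (FreeGroup.of_injective (pow_left_injective hn hpow)) zero_ne_one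

end FreePairs

theorem IsIsolatedTreeAction.compHom {H H' V : Type*} [Group H] [Group H'] [MulAction H V]
    {d : V → V → ℕ} (hd : IsIsolatedTreeAction H d) (f : H' →* H) :
    letI := MulAction.compHom V f
    IsIsolatedTreeAction H' d :=
  letI := MulAction.compHom V f
  { hd.toIsTreeDist with
    dist_smul := fun g => hd.dist_smul (f g)
    no_inversion := fun g => hd.no_inversion (f g)
    fixedBy_zpow_subset := fun {g n} hg hn x (hx : f (g ^ n) • x = x) =>
      hd.fixedBy_zpow_subset (g := f g) hg hn (by rwa [map_zpow] at hx) }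

section PermSemidirectFree

variable {K X : Type*} [Group K] [MulAction K X]

theorem PermSemidirect.noncommutingPairsFree (hK : NoncommutingPairsFree K)
    (hX : ∀ {k : K} {n : ℤ}, n ≠ 0 → fixedBy X (k ^ n) ⊆ fixedBy X k) :
    NoncommutingPairsFree (PermSemidirect K X) := by
  classical
  intro a b hab
  by_cases hright : Commute a.right b.right
  swap
  · exact lift_pair_injective_of_map SemidirectProduct.rightHom (hK hright)
  set f : FreeGroup (Fin 2) →* PermSemidirect K X := FreeGroup.lift ![a, b]
  let _ := MulAction.compHom (FreeGroup X) f
  have hcomm (p q : FreeGroup (Fin 2)) (hpq : IsGeneratingPair p q) (x : FreeGroup X) :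
      ⁅p, q⁆ • x ≠ x := by
    intro hx
    have hr : (f ⁅p, q⁆).right = 1 := by
      change (SemidirectProduct.rightHom.comp f) ⁅p, q⁆ = 1
      rw [map_commutatorElement, commutatorElement_eq_one_iff_commute]
      exact isGeneratingPair_freeGroup_of.commute_map _ (by simpa [f] using hright) p q
    have hl : (f ⁅p, q⁆).left = 1 := by
      change f ⁅p, q⁆ • x = x at hx
      rwa [PermSemidirect.smul_def, hr, map_one, MulAut.one_apply, mul_eq_right] at hx
    have hpq' : Commute (f p) (f q) := by
      rw [← commutatorElement_eq_one_iff_commute, ← map_commutatorElement]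
      exact SemidirectProduct.ext hl hr
    refine hab ?_
    simpa [f] using hpq.commute_map f hpq' (FreeGroup.of 0) (FreeGroup.of 1)
  have hinj := ((isIsolatedTreeAction_cayleyDist hX).compHom f).toPermHom_injective
    isGeneratingPair_freeGroup_of hcomm
  have hcomp : toPermHom (FreeGroup (Fin 2)) (FreeGroup X) =
      (toPermHom (PermSemidirect K X) (FreeGroup X)).comp f :=
    MonoidHom.ext fun _ => Equiv.ext fun _ => rfl
  rw [hcomp, MonoidHom.coe_comp] at hinj
  exact hinj.of_comp

theorem PermSemidirect.isMulTorsionFree [IsMulTorsionFree K] (hK : NoncommutingPairsFree K)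
    (hX : ∀ {k : K} {n : ℤ}, n ≠ 0 → fixedBy X (k ^ n) ⊆ fixedBy X k) :
    IsMulTorsionFree (PermSemidirect K X) := by
  refine (noncommutingPairsFree hK hX).isMulTorsionFree fun g n hn hg => ?_
  have hright : g.right = 1 := by
    have h : g.right ^ n = 1 := by
      rw [← SemidirectProduct.rightHom_eq_right, ← map_pow, hg, map_one]
    exact (pow_eq_one_iff_left hn).mp h
  have hinl : SemidirectProduct.inl g.left = g := SemidirectProduct.ext rfl hright.symm
  rw [← hinl, ← map_pow, map_eq_one_iff _ SemidirectProduct.inl_injective] at hg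
  rw [← hinl, (pow_eq_one_iff_left hn).mp hg, map_one]

end PermSemidirectFree

/-! ### Splitting off a vertex -/

namespace Raag

variable {V : Type*} {Γ : SimpleGraph V} {G : Type*} [Group G]

theorem commute_of {u v : V} (h : Γ.Adj u v) :
    Commute (PresentedGroup.of u : Raag Γ) (PresentedGroup.of v) := by
  rw [← commutatorElement_eq_one_iff_commute]
  exact PresentedGroup.one_of_mem ⟨u, v, h, rfl⟩

/-- The universal property of `Raag Γ`. -/
def lift (f : V → G) (hf : ∀ u v, Γ.Adj u v → Commute (f u) (f v)) : Raag Γ →* G :=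
  PresentedGroup.toGroup (f := f) <| by
    rintro _ ⟨u, v, h, rfl⟩
    simpa [← commutatorElement_def, commutatorElement_eq_one_iff_commute] using hf u v h

@[simp]
theorem lift_of (f : V → G) (hf : ∀ u v, Γ.Adj u v → Commute (f u) (f v)) (u : V) :
    lift f hf (PresentedGroup.of u) = f u :=
  PresentedGroup.toGroup.of _

theorem range_le_of_forall_of_mem {f : Raag Γ →* G} {S : Subgroup G}
    (hf : ∀ u, f (PresentedGroup.of u) ∈ S) : f.range ≤ S := by
  rw [MonoidHom.range_eq_map, ← PresentedGroup.closure_range_of, Subgroup.map_le_iff_le_comap,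
    Subgroup.closure_le]
  rintro _ ⟨u, rfl⟩
  exact hf u

theorem commute_map {f : Raag Γ →* G} {g : G} (hf : ∀ u, Commute (f (PresentedGroup.of u)) g)
    (x : Raag Γ) : Commute (f x) g :=
  Subgroup.mem_centralizer_singleton_iff.mp <| range_le_of_forall_of_mem
    (fun u => Subgroup.mem_centralizer_singleton_iff.mpr (hf u)) ⟨x, rfl⟩

section Induce

variable (s : Set V)

/-- The homomorphism induced by the inclusion of a set of vertices. -/
def ofInduce : Raag (Γ.induce s) →* Raag Γ :=
  lift (fun u => PresentedGroup.of u.1) fun _ _ h => commute_of h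

@[simp]
theorem ofInduce_of (u : s) :
    ofInduce s (PresentedGroup.of u : Raag (Γ.induce s)) = PresentedGroup.of u.1 :=
  lift_of _ _ u

open Classical in
/-- The retraction of `Raag Γ` that kills the vertices outside `s`. -/
noncomputable def toInduce : Raag Γ →* Raag (Γ.induce s) :=
  lift (fun u => if h : u ∈ s then PresentedGroup.of ⟨u, h⟩ else 1) fun u v huv => by
    by_cases hu : u ∈ s
    · by_cases hv : v ∈ s
      · simpa [hu, hv] using commute_of (Γ := Γ.induce s) (u := ⟨u, hu⟩) (v := ⟨v, hv⟩) huv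
      · simp [hv]
    · simp [hu]

theorem toInduce_leftInverse : Function.LeftInverse (toInduce (Γ := Γ) s) (ofInduce s) := by
  have h : (toInduce s).comp (ofInduce s) = MonoidHom.id (Raag (Γ.induce s)) := by
    ext u
    simp [toInduce]
  exact DFunLike.congr_fun h

theorem ofInduce_injective : Function.Injective (ofInduce (Γ := Γ) s) :=
  (toInduce_leftInverse s).injective

end Induce

end Raag

section Isolated

variable {K L : Type*} [Group K] [Group L]

theorem mem_range_of_zpow_mem_range [IsMulTorsionFree K] {ι : L →* K} {ρ : K →* L}
    (h : Function.LeftInverse ρ ι) {k : K} {n : ℤ} (hn : n ≠ 0) (hk : k ^ n ∈ ι.range) :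
    k ∈ ι.range := by
  obtain ⟨y, hy⟩ := hk
  refine ⟨ρ k, zpow_left_injective hn ?_⟩
  change ι (ρ k) ^ n = k ^ n
  rw [← map_zpow, ← map_zpow, ← hy, h y]

theorem fixedBy_quotient_zpow_subset {A : Subgroup K}
    (hA : ∀ {k : K} {n : ℤ}, n ≠ 0 → k ^ n ∈ A → k ∈ A) {k : K} {n : ℤ} (hn : n ≠ 0) :
    fixedBy (K ⧸ A) (k ^ n) ⊆ fixedBy (K ⧸ A) k := by
  have hmem (k g : K) : k • (g : K ⧸ A) = g ↔ g⁻¹ * k * g ∈ A := by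
    rw [eq_comm, MulAction.Quotient.smul_coe, QuotientGroup.eq, smul_eq_mul, mul_assoc]
  intro x hx
  induction x using QuotientGroup.induction_on with
  | H g =>
    rw [mem_fixedBy, hmem] at hx ⊢
    have hconj : g⁻¹ * k ^ n * g = (g⁻¹ * k * g) ^ n := by
      simpa using (conj_zpow (i := n) (a := g⁻¹) (b := k)).symm
    exact hA hn (hconj ▸ hx)

end Isolated

namespace Raag

variable {V : Type*} (Γ : SimpleGraph V) (v : V)

/-- The group of the graph `Γ` with the vertex `v` deleted. -/
abbrev DeleteVertex : Type _ := Raag (Γ.induce {v}ᶜ)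

/-- The subgroup generated by the link of `v` inside the group of `Γ` with `v` deleted. -/
abbrev linkSubgroup : Subgroup (DeleteVertex Γ v) :=
  (ofInduce (Γ := Γ.induce {v}ᶜ) {u | Γ.Adj v u.1}).range

/-- `Raag Γ` is the HNN extension of `K = DeleteVertex Γ v` whose stable letter `v` centralises
`linkSubgroup Γ v`. The conjugates of `v` by `K` freely generate a normal complement of `K` and
correspond to the cosets of `linkSubgroup Γ v`, whence this form of it as a semidirect product. -/
abbrev VertexSplitting : Type _ :=
  PermSemidirect (DeleteVertex Γ v) (DeleteVertex Γ v ⧸ linkSubgroup Γ v)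

/-- The stable letter of the splitting of `Raag Γ` at `v`. -/
def stableLetter : VertexSplitting Γ v :=
  SemidirectProduct.inl (FreeGroup.of ((1 : DeleteVertex Γ v) : DeleteVertex Γ v ⧸ _))

theorem commute_stableLetter_of_adj {u : ({v}ᶜ : Set V)} (h : Γ.Adj v u) :
    Commute (stableLetter Γ v) (SemidirectProduct.inr (PresentedGroup.of u)) := by
  have hfix : (PresentedGroup.of u : DeleteVertex Γ v) •
      ((1 : DeleteVertex Γ v) : DeleteVertex Γ v ⧸ linkSubgroup Γ v) = (1 : DeleteVertex Γ v) := by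
    rw [eq_comm, MulAction.Quotient.smul_coe, QuotientGroup.eq, inv_one, one_mul, smul_eq_mul,
      mul_one]
    exact ⟨PresentedGroup.of ⟨u, h⟩, ofInduce_of _ _⟩
  refine SemidirectProduct.ext ?_ ?_
  · simp [stableLetter, hfix]
  · simp [stableLetter]

open Classical in
/-- The map of `Raag Γ` to its splitting at `v`, with left inverse `ofVertexSplitting`. -/
noncomputable def toVertexSplitting : Raag Γ →* VertexSplitting Γ v :=
  lift (fun u => if h : u = v then stableLetter Γ v
    else SemidirectProduct.inr (PresentedGroup.of ⟨u, h⟩)) fun u w huw => by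
    by_cases hu : u = v
    · subst hu
      simpa [huw.ne'] using commute_stableLetter_of_adj Γ u (u := ⟨w, huw.ne'⟩) huw
    · by_cases hw : w = v
      · subst hw
        simpa [hu] using (commute_stableLetter_of_adj Γ w (u := ⟨u, hu⟩) huw.symm).symm
      · simpa [hu, hw] using (commute_of (Γ := Γ.induce {v}ᶜ) (u := ⟨u, hu⟩) (v := ⟨w, hw⟩) huw).map
          SemidirectProduct.inr

/-- The conjugate of `v` by an element of a coset of `linkSubgroup Γ v`. -/
def conjVertex (x : DeleteVertex Γ v ⧸ linkSubgroup Γ v) : Raag Γ :=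
  Quotient.liftOn' x (fun k => MulAut.conj (ofInduce {v}ᶜ k) (PresentedGroup.of v)) <| by
    intro k l hkl
    obtain ⟨y, hy⟩ := QuotientGroup.leftRel_apply.mp hkl
    have hcomm : Commute (ofInduce {v}ᶜ (k⁻¹ * l)) (PresentedGroup.of v) := by
      rw [← hy]
      refine commute_map (f := (ofInduce {v}ᶜ).comp (ofInduce {u | Γ.Adj v u.1})) (fun u => ?_) y
      rw [MonoidHom.comp_apply, ofInduce_of, ofInduce_of]
      exact (commute_of u.2).symm
    rw [← mul_inv_cancel_left k l, map_mul, map_mul, MulAut.mul_apply]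
    congr 1
    rw [MulAut.conj_apply, hcomm.eq, mul_inv_cancel_right]

theorem conjVertex_smul (k : DeleteVertex Γ v) (x : DeleteVertex Γ v ⧸ linkSubgroup Γ v) :
    conjVertex Γ v (k • x) = MulAut.conj (ofInduce {v}ᶜ k) (conjVertex Γ v x) := by
  induction x using QuotientGroup.induction_on with
  | H g =>
    change MulAut.conj (ofInduce {v}ᶜ (k * g)) (PresentedGroup.of v) =
      MulAut.conj (ofInduce {v}ᶜ k) (MulAut.conj (ofInduce {v}ᶜ g) (PresentedGroup.of v))
    rw [map_mul, map_mul, MulAut.mul_apply]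

/-- The map of the splitting at `v` to `Raag Γ`. -/
def ofVertexSplitting : VertexSplitting Γ v →* Raag Γ :=
  SemidirectProduct.lift (FreeGroup.lift (conjVertex Γ v)) (ofInduce {v}ᶜ) fun k => by
    ext x
    simpa using conjVertex_smul Γ v k x

theorem ofVertexSplitting_leftInverse :
    Function.LeftInverse (ofVertexSplitting Γ v) (toVertexSplitting Γ v) := by
  have h : (ofVertexSplitting Γ v).comp (toVertexSplitting Γ v) = MonoidHom.id (Raag Γ) := by
    ext u
    by_cases hu : u = v
    · simp [toVertexSplitting, ofVertexSplitting, hu, stableLetter, conjVertex]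
    · simp [toVertexSplitting, ofVertexSplitting, hu]
  exact DFunLike.congr_fun h

end Raag

namespace Raag

section FiniteGraph

variable {V : Type*} {Γ : SimpleGraph V}

theorem fixedBy_quotient_linkSubgroup_zpow_subset (v : V) [IsMulTorsionFree (DeleteVertex Γ v)]
    {k : DeleteVertex Γ v} {n : ℤ} (hn : n ≠ 0) :
    fixedBy (DeleteVertex Γ v ⧸ linkSubgroup Γ v) (k ^ n) ⊆ fixedBy _ k :=
  fixedBy_quotient_zpow_subset (mem_range_of_zpow_mem_range (toInduce_leftInverse _)) hn

theorem noncommutingPairsFree_of_deleteVertex (v : V) [IsMulTorsionFree (DeleteVertex Γ v)]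
    (h : NoncommutingPairsFree (DeleteVertex Γ v)) : NoncommutingPairsFree (Raag Γ) :=
  (PermSemidirect.noncommutingPairsFree h
    (fixedBy_quotient_linkSubgroup_zpow_subset v)).of_injective
      (ofVertexSplitting_leftInverse Γ v).injective

theorem isMulTorsionFree_of_deleteVertex (v : V) [IsMulTorsionFree (DeleteVertex Γ v)]
    (h : NoncommutingPairsFree (DeleteVertex Γ v)) : IsMulTorsionFree (Raag Γ) :=
  have := PermSemidirect.isMulTorsionFree h (fixedBy_quotient_linkSubgroup_zpow_subset v)
  (ofVertexSplitting_leftInverse Γ v).injective.isMulTorsionFree (toVertexSplitting Γ v)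

theorem subsingleton_of_isEmpty [IsEmpty V] : Subsingleton (Raag Γ) :=
  (PresentedGroup.mk_surjective _).subsingleton

theorem isMulTorsionFree_and_noncommutingPairsFree_of_finite [Finite V] (Γ : SimpleGraph V) :
    IsMulTorsionFree (Raag Γ) ∧ NoncommutingPairsFree (Raag Γ) := by
  induction hn : Nat.card V using Nat.strong_induction_on generalizing V with
  | _ n ih =>
    obtain _ | ⟨⟨v⟩⟩ := isEmpty_or_nonempty V
    · have := subsingleton_of_isEmpty (Γ := Γ)
      exact ⟨inferInstance, fun a b hab => absurd (Subsingleton.elim _ _) hab⟩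
    · have hlt : Nat.card ({v}ᶜ : Set V) < n := hn ▸ Finite.card_subtype_lt (x := v) (by simp)
      obtain ⟨_, hfree⟩ := ih _ hlt (Γ.induce {v}ᶜ) rfl
      exact ⟨isMulTorsionFree_of_deleteVertex v hfree,
        noncommutingPairsFree_of_deleteVertex v hfree⟩

end FiniteGraph

section InfiniteGraph

variable {V : Type*} (Γ : SimpleGraph V)

variable {Γ} in
theorem range_ofInduce_mono {s t : Set V} (hst : s ⊆ t) :
    (ofInduce (Γ := Γ) s).range ≤ (ofInduce t).range :=
  range_le_of_forall_of_mem fun u =>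
    ⟨PresentedGroup.of ⟨u, hst u.2⟩, by rw [ofInduce_of, ofInduce_of]⟩

theorem exists_finite_mem_range_ofInduce (x : Raag Γ) :
    ∃ s : Set V, s.Finite ∧ x ∈ (ofInduce s).range := by
  have hx : x ∈ Subgroup.closure (Set.range PresentedGroup.of) := by
    rw [PresentedGroup.closure_range_of]
    exact Subgroup.mem_top x
  induction hx using Subgroup.closure_induction with
  | mem _ h =>
    obtain ⟨u, rfl⟩ := h
    exact ⟨{u}, Set.finite_singleton u, PresentedGroup.of ⟨u, rfl⟩, ofInduce_of _ _⟩
  | one => exact ⟨∅, Set.finite_empty, one_mem _⟩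
  | mul x y _ _ hx hy =>
    obtain ⟨s, hs, hx⟩ := hx
    obtain ⟨t, ht, hy⟩ := hy
    exact ⟨s ∪ t, hs.union ht, mul_mem (range_ofInduce_mono Set.subset_union_left hx)
      (range_ofInduce_mono Set.subset_union_right hy)⟩
  | inv x _ hx =>
    obtain ⟨s, hs, hx⟩ := hx
    exact ⟨s, hs, inv_mem hx⟩

/-- **Baudisch's theorem**. -/
theorem noncommutingPairsFree : NoncommutingPairsFree (Raag Γ) := by
  intro a b hab
  obtain ⟨s, hs, ha⟩ := exists_finite_mem_range_ofInduce Γ a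
  obtain ⟨t, ht, hb⟩ := exists_finite_mem_range_ofInduce Γ b
  have := (hs.union ht).to_subtype
  obtain ⟨a, rfl⟩ := range_ofInduce_mono (Set.subset_union_left (t := t)) ha
  obtain ⟨b, rfl⟩ := range_ofInduce_mono (Set.subset_union_right (s := s)) hb
  have hfree := (isMulTorsionFree_and_noncommutingPairsFree_of_finite (Γ.induce (s ∪ t))).2
    fun hc => hab (hc.map _)
  rw [← comp_lift_pair, MonoidHom.coe_comp]
  exact (ofInduce_injective _).comp hfree

instance : IsMulTorsionFree (Raag Γ) := by
  refine (noncommutingPairsFree Γ).isMulTorsionFree fun g n hn hg => ?_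
  obtain ⟨s, hs, g, rfl⟩ := exists_finite_mem_range_ofInduce Γ g
  have := hs.to_subtype
  have := (isMulTorsionFree_and_noncommutingPairsFree_of_finite (Γ.induce s)).1
  rw [← map_pow, map_eq_one_iff _ (ofInduce_injective s)] at hg
  rw [(pow_eq_one_iff_left hn).mp hg, map_one]

end InfiniteGraph

end Raag

/-! ### Residually right-angled Artin groups -/

section TwoGenerated

variable {G H : Type*} [Group G] [Group H]

theorem NoncommutingPairsFree.of_residually (hH : NoncommutingPairsFree H)
    (hG : Residually H G) : NoncommutingPairsFree G := by
  intro a b hab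
  obtain ⟨φ, hφ⟩ := hG ⁅a, b⁆ (mt commutatorElement_eq_one_iff_commute.mp hab)
  rw [map_commutatorElement, Ne, commutatorElement_eq_one_iff_commute] at hφ
  exact lift_pair_injective_of_map φ (hH hφ)

theorem Residually.isMulTorsionFree [IsMulTorsionFree H] (hH : NoncommutingPairsFree H)
    (hG : Residually H G) : IsMulTorsionFree G := by
  refine (hH.of_residually hG).isMulTorsionFree fun g n hn hg => ?_
  by_contra hne
  obtain ⟨φ, hφ⟩ := hG g hne
  exact hφ ((pow_eq_one_iff_left hn).mp (by rw [← map_pow, hg, map_one]))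

theorem IsGeneratingPair.nonempty_mulEquiv_freeGroup {a b : G} (h : IsGeneratingPair a b)
    (hfree : Function.Injective (FreeGroup.lift ![a, b])) :
    Nonempty (G ≃* FreeGroup (Fin 2)) :=
  ⟨(MulEquiv.ofBijective _ ⟨hfree, h.lift_surjective⟩).symm⟩

theorem IsGeneratingPair.exists_mulEquiv_freeAbelian {A : Type*} [CommGroup A] [IsMulTorsionFree A]
    {a b : A} (h : IsGeneratingPair a b) :
    ∃ n : ℕ, n ≤ 2 ∧ Nonempty (A ≃* Multiplicative (Fin n → ℤ)) := by
  let f : (Fin 2 → ℤ) →ₗ[ℤ] Additive A := Fintype.linearCombination ℤ ![.ofMul a, .ofMul b]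
  have hf : Function.Surjective f := by
    intro z
    obtain ⟨m, n, hmn⟩ := Subgroup.mem_closure_pair.mp (h ▸ Subgroup.mem_top z.toMul)
    refine ⟨![m, n], Additive.toMul.injective ?_⟩
    simpa [f, Fintype.linearCombination_apply] using hmn
  have := Module.Finite.of_surjective f hf
  have hrank : Module.finrank ℤ (Additive A) ≤ 2 := by
    simpa using LinearMap.finrank_le_finrank_of_surjective hf
  let e := (Module.finBasis ℤ (Additive A)).equivFun.toAddEquiv
  exact ⟨_, hrank, ⟨(MulEquiv.refl A : A ≃* Multiplicative (Additive A)).trans e.toMultiplicative⟩⟩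

theorem two_generated_limit_group_free_or_freeAbelian_general
    {V : Type*} (Γ : SimpleGraph V) {G : Type*} [Group G] (hG : Residually (Raag Γ) G)
    (hgen : ∃ a b : G, Subgroup.closure ({a, b} : Set G) = ⊤) :
    (∃ n : ℕ, n ≤ 2 ∧ Nonempty (G ≃* FreeGroup (Fin n))) ∨
    (∃ n : ℕ, n ≤ 2 ∧ Nonempty (G ≃* Multiplicative (Fin n → ℤ))) := by
  obtain ⟨a, b, hab : IsGeneratingPair a b⟩ := hgen
  have hfree := Raag.noncommutingPairsFree Γ
  by_cases hc : Commute a b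
  · let _ : CommGroup G := { mul_comm := hab.commute_map (MonoidHom.id G) hc }
    have := hG.isMulTorsionFree hfree
    exact .inr hab.exists_mulEquiv_freeAbelian
  · exact .inl ⟨2, le_rfl, hab.nonempty_mulEquiv_freeGroup (hfree.of_residually hG hc)⟩

end TwoGenerated

theorem FullyResidually.residually {H G : Type*} [Group H] [Group G] (h : FullyResidually H G) :
    Residually H G := fun g hg => by
  simpa using h {g} (by simpa using hg)

theorem two_generated_limit_group_free_or_freeAbelian
    {V : Type} [Fintype V] (Γ : SimpleGraph V)
    (G : Type) [Group G] (hG : IsLimitGroupOver (Raag Γ) G)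
    (hgen : ∃ a b : G, Subgroup.closure ({a, b} : Set G) = ⊤) :
    (∃ n : ℕ, n ≤ 2 ∧ Nonempty (G ≃* FreeGroup (Fin n))) ∨
    (∃ n : ℕ, n ≤ 2 ∧ Nonempty (G ≃* Multiplicative (Fin n → ℤ))) :=
  two_generated_limit_group_free_or_freeAbelian_general Γ hG.2.residually hgen
end

section
/- Let Γ be a finite simplicial graph and n ∈ ℕ, and suppose there is an injective group homomorphism from 𝔾(Γ) into SL_n(ℝ). Then every limit group over 𝔾(Γ) admits an injective group homomorphism into SL_n(ℝ): if G is a finitely generated group that is fully residually 𝔾(Γ), there is an injective homomorphism G → SL_n(ℝ). -/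
/-!
A group that is fully residually `SL_m(ℝ)` embeds into `SL_m` of an ultrapower `ℝ*` of `ℝ`, and if
it is finitely generated, into `SL_m(A)` for a finitely generated `ℚ`-algebra `A ⊆ ℝ*`. Such an `A`
is finitely presented, so by Łoś's theorem every nonzero element of `A` is nonzero at some
homomorphism `A → ℝ`.

A domain `A` with this property embeds into `ℝ`. By Noether normalization `A` is integral over a
polynomial ring `B = ℚ[X₁, …, Xₛ]`, and `Frac A` is generated over `Frac B` by some integral `β`.
At a real point where the derivative of the minimal polynomial of `β` does not vanish, this
polynomial specializes to one with a simple real root. A simple root survives small changes of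
the parameters, so they can be moved to an algebraically independent tuple `t`, and sending
`X` to `t` and `β` to the surviving root is injective.
-/

open Filter Topology

section SimpleRoots

lemma exists_neg_and_exists_pos_of_deriv_ne_zero {f : ℝ → ℝ} {x : ℝ} (hx : f x = 0)
    (hf : deriv f x ≠ 0) : (∃ a, f a < 0) ∧ ∃ b, 0 < f b := by
  constructor <;> by_contra! h
  · exact hf (IsLocalMin.deriv_eq_zero (.of_forall fun y => hx ▸ h y))
  · exact hf (IsLocalMax.deriv_eq_zero (.of_forall fun y => hx ▸ h y))

lemma eventually_exists_eq_zero_of_deriv_ne_zero {X : Type*} [TopologicalSpace X]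
    {f : X → ℝ → ℝ} (hf : ∀ t, Continuous (f t)) {t₀ : X} (hf₀ : ∀ y, ContinuousAt (f · y) t₀)
    {x : ℝ} (hx : f t₀ x = 0) (hderiv : deriv (f t₀) x ≠ 0) :
    ∀ᶠ t in 𝓝 t₀, ∃ y, f t y = 0 := by
  obtain ⟨⟨a, ha⟩, b, hb⟩ := exists_neg_and_exists_pos_of_deriv_ne_zero hx hderiv
  filter_upwards [(hf₀ a).eventually_lt_const ha, (hf₀ b).eventually_const_lt hb] with t hta htb
  exact mem_range_of_exists_le_of_exists_ge (hf t) ⟨a, hta.le⟩ ⟨b, htb.le⟩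

end SimpleRoots

section AlgebraicallyIndependentTuples

open Polynomial

variable {σ k 𝕜 : Type*} [CommRing k]

lemma continuous_mvPolynomial_aeval [CommRing 𝕜] [TopologicalSpace 𝕜] [IsTopologicalSemiring 𝕜]
    [Algebra k 𝕜] (p : MvPolynomial σ k) :
    Continuous fun t : σ → 𝕜 => MvPolynomial.aeval t p := by
  simpa only [MvPolynomial.eval_map, ← MvPolynomial.aeval_def] using
    MvPolynomial.continuous_eval (p.map (algebraMap k 𝕜))

lemma dense_setOf_mvPolynomial_aeval_ne_zero [CommRing 𝕜] [IsDomain 𝕜] [TopologicalSpace 𝕜]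
    [T1Space 𝕜] [∀ x : 𝕜, (𝓝[≠] x).NeBot] [Algebra k 𝕜] [FaithfulSMul k 𝕜]
    {p : MvPolynomial σ k} (hp : p ≠ 0) : Dense {t : σ → 𝕜 | MvPolynomial.aeval t p ≠ 0} := by
  refine interior_eq_empty_iff_dense_compl.1 (Set.eq_empty_of_forall_notMem fun t ht => hp ?_)
  have hzero : {u : σ → 𝕜 | MvPolynomial.aeval u p = 0} ∈ 𝓝 t := mem_interior_iff_mem_nhds.1 ht
  rw [nhds_pi, Filter.mem_pi] at hzero
  obtain ⟨I, -, s, hs, hsub⟩ := hzero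
  refine MvPolynomial.map_injective (algebraMap k 𝕜) (FaithfulSMul.algebraMap_injective k 𝕜)
    (MvPolynomial.funext_set s (fun i => infinite_of_mem_nhds (t i) (hs i)) fun u hu => ?_)
  have haeval : MvPolynomial.aeval u p = 0 := hsub fun i _ => hu i trivial
  simpa [MvPolynomial.eval_map, ← MvPolynomial.aeval_def] using haeval

variable [Countable k] [Countable σ]

lemma dense_setOf_algebraicIndependent [NontriviallyNormedField 𝕜] [CompleteSpace 𝕜]
    [Algebra k 𝕜] [FaithfulSMul k 𝕜] : Dense {t : σ → 𝕜 | AlgebraicIndependent k t} := by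
  have hset : {t : σ → 𝕜 | AlgebraicIndependent k t} =
      ⋂ p : {p : MvPolynomial σ k // p ≠ 0}, {t | MvPolynomial.aeval t p.1 ≠ 0} := by
    ext t
    simp [algebraicIndependent_iff, not_imp_not]
  have : Countable (MvPolynomial σ k) :=
    Cardinal.mk_le_aleph0_iff.1 (MvPolynomial.cardinalMk_le_max_lift.trans (by simp))
  rw [hset]
  exact dense_iInter_of_isOpen
    (fun p => isOpen_ne_fun (continuous_mvPolynomial_aeval p.1) continuous_const)
    fun p => dense_setOf_mvPolynomial_aeval_ne_zero p.2

lemma exists_algebraicIndependent_eval_map_aeval_eq_zero [Algebra k ℝ] [FaithfulSMul k ℝ]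
    (P : (MvPolynomial σ k)[X]) {t : σ → ℝ} {x : ℝ}
    (hx : (P.map (MvPolynomial.aeval t).toRingHom).eval x = 0)
    (hder : (P.map (MvPolynomial.aeval t).toRingHom).derivative.eval x ≠ 0) :
    ∃ t' : σ → ℝ, AlgebraicIndependent k t' ∧
      ∃ y : ℝ, (P.map (MvPolynomial.aeval t').toRingHom).eval y = 0 := by
  have hcont (y : ℝ) :
      Continuous fun u : σ → ℝ => (P.map (MvPolynomial.aeval u).toRingHom).eval y := by
    simp_rw [eval_map, eval₂_eq_sum_range]
    exact continuous_finsetSum _ fun i _ =>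
      (continuous_mvPolynomial_aeval (P.coeff i)).mul continuous_const
  have hroot := eventually_exists_eq_zero_of_deriv_ne_zero
    (f := fun u y => (P.map (MvPolynomial.aeval u).toRingHom).eval y)
    (fun u => Polynomial.continuous _) (fun y => (hcont y).continuousAt) hx
    ((Polynomial.deriv _).trans_ne hder)
  exact (mem_closure_iff_frequently.1 (dense_setOf_algebraicIndependent t)).and_eventually hroot
    |>.exists

end AlgebraicallyIndependentTuples

section PrimitiveElements

open Polynomial
open scoped nonZeroDivisors IntermediateField

variable {A B : Type*} [CommRing A] [IsDomain A] [CommRing B] [IsDomain B] [Algebra B A]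

lemma aeval_derivative_minpoly_ne_zero [IsIntegrallyClosed B] [CharZero B]
    [Module.IsTorsionFree B A] {x : A} (hx : IsIntegral B x) :
    aeval x (minpoly B x).derivative ≠ 0 := by
  intro h
  have hder : (minpoly B x).derivative ≠ 0 := derivative_ne_zero.2 (minpoly.natDegree_pos hx).ne'
  exact (degree_derivative_lt (minpoly.ne_zero hx)).not_ge
    (minpoly.IsIntegrallyClosed.degree_le_of_ne_zero hder h)

variable [Algebra.IsIntegral B A] (F : Type*) {K : Type*} [Field F] [Field K]
  [Algebra B F] [Algebra A K] [IsFractionRing A K] [Algebra F K] [Algebra B K]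
  [IsScalarTower B F K] [IsScalarTower B A K]

lemma exists_adjoin_algebraMap_eq_top [FaithfulSMul B A] [FiniteDimensional F K]
    [Algebra.IsSeparable F K] : ∃ β : A, F⟮algebraMap A K β⟯ = ⊤ := by
  obtain ⟨α, hα⟩ := Field.exists_primitive_element F K
  obtain ⟨⟨β, _, b, hb, rfl⟩, hβ⟩ := IsLocalization.surj (Algebra.algebraMapSubmonoid A B⁰) α
  have hb₀ : algebraMap A K (algebraMap B A b) ≠ 0 :=
    (map_ne_zero_iff _ (IsFractionRing.injective A K)).2 <|
      (map_ne_zero_iff _ (FaithfulSMul.algebraMap_injective B A)).2 (nonZeroDivisors.ne_zero hb)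
  have hdiv : α = algebraMap A K β / algebraMap F K (algebraMap B F b) := by
    rw [← IsScalarTower.algebraMap_apply, IsScalarTower.algebraMap_apply B A K,
      eq_div_iff hb₀, hβ]
  refine ⟨β, eq_top_iff.2 ?_⟩
  rw [← hα, IntermediateField.adjoin_simple_le_iff, hdiv]
  exact div_mem (IntermediateField.mem_adjoin_simple_self F _)
    (IntermediateField.algebraMap_mem _ _)

lemma exists_injective_algHom_of_aeval_minpoly_eq_zero [IsIntegrallyClosed B]
    [IsFractionRing B F] {β : A} (hβ : F⟮algebraMap A K β⟯ = ⊤)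
    {L : Type*} [Field L] [Algebra B L] [FaithfulSMul B L] {y : L}
    (hy : aeval y (minpoly B β) = 0) : ∃ f : A →ₐ[B] L, Function.Injective f := by
  let : Algebra F L := (IsFractionRing.lift (FaithfulSMul.algebraMap_injective B L)).toAlgebra
  have : IsScalarTower B F L := .of_algebraMap_eq fun b => (IsFractionRing.lift_algebraMap _ b).symm
  have hβB : IsIntegral B β := Algebra.IsIntegral.isIntegral β
  have hβF : IsIntegral F (algebraMap A K β) := hβB.algebraMap.tower_top
  have hadjoin := (IntermediateField.adjoin_simple_eq_top_iff_of_isAlgebraic hβF.isAlgebraic).1 hβ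
  have hroot : aeval y (minpoly F (algebraMap A K β)) = 0 := by
    rwa [minpoly.isIntegrallyClosed_eq_field_fractions F K hβB, aeval_map_algebraMap]
  let f : K →ₐ[F] L := (PowerBasis.ofAdjoinEqTop hβF hadjoin).lift y hroot
  exact ⟨(f.restrictScalars B).comp (IsScalarTower.toAlgHom B A K),
    f.injective.comp (IsFractionRing.injective A K)⟩

end PrimitiveElements

section RealEmbeddings

open Polynomial

variable {k A : Type*} [Field k] [CommRing A] [Algebra k A]

theorem exists_injective_algHom_real [Countable k] [Algebra k ℝ] [IsDomain A]
    [Algebra.FiniteType k A] (hsep : ∀ a : A, a ≠ 0 → ∃ ψ : A →ₐ[k] ℝ, ψ a ≠ 0) :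
    ∃ f : A →ₐ[k] ℝ, Function.Injective f := by
  have : CharZero k := (algebraMap k ℝ).charZero
  obtain ⟨s, g, hg, hfin⟩ := exists_finite_inj_algHom_of_fg k A
  let B := MvPolynomial (Fin s) k
  let : Algebra B A := g.toAlgebra
  have : IsScalarTower k B A := .of_algHom g
  have : Module.Finite B A := hfin
  have : FaithfulSMul B A := (faithfulSMul_iff_algebraMap_injective B A).2 hg
  let : Algebra (FractionRing B) (FractionRing A) := FractionRing.liftAlgebra B _
  obtain ⟨β, hβ⟩ := exists_adjoin_algebraMap_eq_top (B := B) (A := A) (FractionRing B)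
    (K := FractionRing A)
  have hβint : IsIntegral B β := Algebra.IsIntegral.isIntegral β
  obtain ⟨ψ, hψ⟩ := hsep _ (aeval_derivative_minpoly_ne_zero hβint)
  let t₀ : Fin s → ℝ := fun i => ψ (g (.X i))
  have hψg : MvPolynomial.aeval t₀ = ψ.comp g :=
    MvPolynomial.algHom_ext fun i => MvPolynomial.aeval_X t₀ i
  have hspec (Q : B[X]) : (Q.map (ψ.comp g).toRingHom).eval (ψ β) = ψ (aeval β Q) := by
    rw [eval_map, aeval_def]
    exact (hom_eval₂ Q (algebraMap B A) ψ.toRingHom β).symm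
  obtain ⟨t, ht, y, hy⟩ := exists_algebraicIndependent_eval_map_aeval_eq_zero (minpoly B β)
    (t := t₀) (x := ψ β)
    (by rw [hψg, hspec, minpoly.aeval, map_zero])
    (by rwa [hψg, derivative_map, hspec])
  let : Algebra B ℝ := (MvPolynomial.aeval t : B →ₐ[k] ℝ).toAlgebra
  have : IsScalarTower k B ℝ := .of_algHom (MvPolynomial.aeval t)
  have : FaithfulSMul B ℝ := (faithfulSMul_iff_algebraMap_injective B ℝ).2 ht
  have hroot : aeval y (minpoly B β) = 0 := (eval_map_algebraMap _ _).symm.trans hy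
  obtain ⟨f, hf⟩ := exists_injective_algHom_of_aeval_minpoly_eq_zero (FractionRing B) hβ hroot
  exact ⟨f.restrictScalars k, hf⟩

end RealEmbeddings

section Germs

variable {k I R : Type*} [CommRing k] [CommRing R] [Algebra k R] {l : Filter I}

/-- The constant-germ algebra structure on the ring of germs at `l`; for an ultrafilter `l` this is
the structure of an ultrapower of `R` as an extension of `k`. -/
noncomputable instance germAlgebra : Algebra k (l.Germ R) where
  algebraMap := (Filter.Germ.coeRingHom l).comp (algebraMap k (I → R))
  commutes' _ _ := mul_comm _ _
  smul_def' c x := Filter.Germ.inductionOn x fun y => congrArg _ (Algebra.smul_def c y)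

variable (k l) in
/-- The germ at `l` as an algebra homomorphism on functions, upgrading
`Filter.Germ.coeRingHom`. -/
noncomputable def germAlgHom : (I → R) →ₐ[k] l.Germ R :=
  { Filter.Germ.coeRingHom l with commutes' := fun _ => rfl }

lemma germAlgHom_eq_zero_iff {x : I → R} : germAlgHom k l x = 0 ↔ ∀ᶠ i in l, x i = 0 :=
  Filter.Germ.coe_eq

lemma exists_algHom_ne_zero_of_germ {A : Type*} [CommRing A] [Algebra k A]
    [hA : Algebra.FinitePresentation k A] (f : A →ₐ[k] l.Germ R) {a : A} (ha : f a ≠ 0) :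
    ∃ ψ : A →ₐ[k] R, ψ a ≠ 0 := by
  obtain ⟨m, π, hπ, S, hS⟩ := hA.out
  choose x hx using fun j => Quotient.exists_rep (f (π (.X j)))
  let ψ (i : I) : MvPolynomial (Fin m) k →ₐ[k] R :=
    (Pi.evalAlgHom k (fun _ => R) i).comp (MvPolynomial.aeval x)
  have hlift : f.comp π = (germAlgHom k l).comp (MvPolynomial.aeval x) :=
    MvPolynomial.algHom_ext fun j => by
      simp only [AlgHom.comp_apply, MvPolynomial.aeval_X]
      exact (hx j).symm
  have hf (p : MvPolynomial (Fin m) k) : f (π p) = 0 ↔ ∀ᶠ i in l, ψ i p = 0 := by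
    rw [← germAlgHom_eq_zero_iff (k := k)]
    exact Eq.congr_left (DFunLike.congr_fun hlift p)
  have hker : ∀ᶠ i in l, RingHom.ker π ≤ RingHom.ker (ψ i) := by
    have hgen : ∀ᶠ i in l, ∀ p ∈ S, ψ i p = 0 :=
      (eventually_all_finset S).2 fun p hp =>
        (hf p).1 (by rw [show π p = 0 from hS.le (Ideal.subset_span hp), map_zero])
    filter_upwards [hgen] with i hi
    exact hS.ge.trans (Ideal.span_le.2 hi)
  obtain ⟨p, rfl⟩ := hπ a
  obtain ⟨i, hi, hker_i⟩ := (not_eventually.1 (mt (hf p).2 ha)).and_eventually hker |>.exists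
  exact ⟨AlgHom.liftOfSurjective π hπ (ψ i) hker_i,
    (AlgHom.liftOfSurjective_apply π hπ (ψ i) hker_i p).trans_ne hi⟩

end Germs

theorem exists_injective_algHom_real_of_germ {k A I : Type*} [Field k] [Countable k] [Algebra k ℝ]
    [CommRing A] [Algebra k A] [Algebra.FiniteType k A] {U : Ultrafilter I}
    (f : A →ₐ[k] (U : Filter I).Germ ℝ) (hf : Function.Injective f) :
    ∃ g : A →ₐ[k] ℝ, Function.Injective g := by
  have : IsDomain A := hf.isDomain f.toRingHom
  have : Algebra.FinitePresentation k A := Algebra.FinitePresentation.of_finiteType.1 inferInstance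
  exact exists_injective_algHom_real fun a ha =>
    exists_algHom_ne_zero_of_germ f ((map_ne_zero_iff f hf).2 ha)

section SpecialLinearGroups

open Matrix (SpecialLinearGroup)

variable {m G R S : Type*} [Fintype m] [DecidableEq m] [Group G] [CommRing R] [CommRing S]

lemma specialLinearGroup_map_injective {f : R →+* S} (hf : Function.Injective f) :
    Function.Injective (SpecialLinearGroup.map (n := m) f) := fun _ _ h =>
  Matrix.SpecialLinearGroup.ext _ _ fun a b => hf ((Matrix.SpecialLinearGroup.ext_iff _ _).1 h a b)

lemma mem_range_specialLinearGroup_map {f : R →+* S} (hf : Function.Injective f)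
    {M : SpecialLinearGroup m S} (hM : ∀ a b, M a b ∈ f.range) :
    M ∈ (SpecialLinearGroup.map (n := m) f).range := by
  choose N hN using hM
  have hNM : f.mapMatrix (.of N) = M.1 := Matrix.ext hN
  refine ⟨⟨.of N, hf ?_⟩, Subtype.ext hNM⟩
  rw [RingHom.map_det, hNM, M.2, map_one]

lemma exists_fg_subalgebra_map_comp_eq (k : Type*) [CommRing k] [Algebra k R] [Group.FG G]
    (ρ : G →* SpecialLinearGroup m R) :
    ∃ A : Subalgebra k R, A.FG ∧
      ∃ ρ' : G →* SpecialLinearGroup m A, (SpecialLinearGroup.map A.val.toRingHom).comp ρ' = ρ := by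
  obtain ⟨S, hS⟩ := Group.fg_def.1 ‹Group.FG G›
  let A := Algebra.adjoin k (⋃ g ∈ S, Set.range fun ab : m × m => ρ g ab.1 ab.2)
  have hinj : Function.Injective (SpecialLinearGroup.map (n := m) A.val.toRingHom) :=
    specialLinearGroup_map_injective Subtype.val_injective
  have hrange : ρ.range ≤ (SpecialLinearGroup.map (n := m) A.val.toRingHom).range := by
    rw [MonoidHom.range_eq_map, ← hS, MonoidHom.map_closure, Subgroup.closure_le]
    rintro _ ⟨g, hg, rfl⟩
    refine mem_range_specialLinearGroup_map Subtype.val_injective fun a b => ?_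
    exact ⟨⟨ρ g a b, Algebra.subset_adjoin (Set.mem_biUnion hg ⟨(a, b), rfl⟩)⟩, rfl⟩
  refine ⟨A, ?_, (MonoidHom.ofInjective hinj).symm.toMonoidHom.comp
    (ρ.codRestrict _ fun g => hrange ⟨g, rfl⟩), ?_⟩
  · exact Subalgebra.fg_def.2 ⟨_, S.finite_toSet.biUnion fun g _ => Set.finite_range _, rfl⟩
  · ext1 g
    exact congrArg Subtype.val ((MonoidHom.ofInjective hinj).apply_symm_apply _)

variable {I : Type*}

/-- The identification of a family of matrices of determinant one with a matrix of determinant one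
over the product ring. -/
def piSpecialLinearGroup : (I → SpecialLinearGroup m R) →* SpecialLinearGroup m (I → R) where
  toFun M := ⟨.of fun a b i => M i a b, funext fun i =>
    ((Pi.evalRingHom (fun _ => R) i).map_det _).trans (M i).2⟩
  map_one' := Matrix.SpecialLinearGroup.ext _ _ fun a b => funext fun i => by
    by_cases h : a = b <;> simp [h]
  map_mul' M N := Matrix.SpecialLinearGroup.ext _ _ fun a b => funext fun i =>
    (Finset.sum_apply i Finset.univ fun c j => M j a c * N j c b).symm

/-- The representation over the ring of germs at `l` (over an ultrapower of `R`, if `l` is an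
ultrafilter) assembled from a family `φ` of representations over `R`. -/
def germRepresentation (l : Filter I) (φ : I → G →* SpecialLinearGroup m R) :
    G →* SpecialLinearGroup m (l.Germ R) :=
  (SpecialLinearGroup.map (Filter.Germ.coeRingHom l)).comp
    (piSpecialLinearGroup.comp (MonoidHom.pi φ))

lemma germRepresentation_eq_one_iff {l : Filter I} {φ : I → G →* SpecialLinearGroup m R} {g : G} :
    germRepresentation l φ g = 1 ↔ ∀ᶠ i in l, φ i g = 1 := by
  have hone : (1 : SpecialLinearGroup m (l.Germ R)) =
      SpecialLinearGroup.map (Filter.Germ.coeRingHom l) (piSpecialLinearGroup 1) := by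
    rw [map_one, map_one]
  simp only [hone, Matrix.SpecialLinearGroup.ext_iff, eventually_all]
  exact forall₂_congr fun a b => Filter.Germ.coe_eq

namespace FullyResidually

lemma comp_injective {H K : Type*} [Group H] [Group K] (hG : FullyResidually H G) {ρ : H →* K}
    (hρ : Function.Injective ρ) : FullyResidually K G := fun s hs =>
  have ⟨φ, hφ⟩ := hG s hs
  ⟨ρ.comp φ, fun g hg => (map_ne_one_iff ρ hρ).2 (hφ g hg)⟩

theorem exists_injective_ultrapower (hG : FullyResidually (SpecialLinearGroup m R) G) :
    ∃ (U : Ultrafilter (Finset G)) (ρ : G →* SpecialLinearGroup m ((U : Filter (Finset G)).Germ R)),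
      Function.Injective ρ := by
  classical
  choose φ hφ using fun s : Finset G => hG (s.erase 1) fun g hg => Finset.ne_of_mem_erase hg
  let U : Ultrafilter (Finset G) := .of atTop
  refine ⟨U, germRepresentation U φ, (injective_iff_map_eq_one _).2 fun g hg => ?_⟩
  have hmem : ∀ᶠ s in (U : Filter (Finset G)), g ∈ s :=
    Ultrafilter.of_le atTop ((eventually_ge_atTop {g}).mono fun _ => Finset.singleton_subset_iff.1)
  obtain ⟨s, hφg, hgs⟩ := ((germRepresentation_eq_one_iff.1 hg).and hmem).exists
  by_contra hg₁
  exact hφ s g (Finset.mem_erase.2 ⟨hg₁, hgs⟩) hφg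

end FullyResidually

theorem limit_group_embeds_in_SL_general {H : Type*} [Group H]
    (hemb : ∃ ρ : H →* SpecialLinearGroup m ℝ, Function.Injective ρ)
    (hG : IsLimitGroupOver H G) : ∃ ρ : G →* SpecialLinearGroup m ℝ, Function.Injective ρ := by
  obtain ⟨ρH, hρH⟩ := hemb
  obtain ⟨_, hres⟩ := hG
  obtain ⟨U, ρ, hρ⟩ := FullyResidually.exists_injective_ultrapower (hres.comp_injective hρH)
  -- Instance search would supply `DivisionRing.toRatAlgebra` instead.
  let : Algebra ℚ ((U : Filter (Finset G)).Germ ℝ) := germAlgebra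
  obtain ⟨A, hA, ρA, rfl⟩ := exists_fg_subalgebra_map_comp_eq ℚ ρ
  rw [MonoidHom.coe_comp] at hρ
  have : Algebra.FiniteType ℚ A := A.fg_iff_finiteType.1 hA
  obtain ⟨f, hf⟩ := exists_injective_algHom_real_of_germ A.val Subtype.val_injective
  exact ⟨(SpecialLinearGroup.map f.toRingHom).comp ρA,
    (specialLinearGroup_map_injective hf).comp hρ.of_comp⟩

end SpecialLinearGroups

theorem limit_group_embeds_in_SL
    {V : Type} [Fintype V] (Γ : SimpleGraph V) (n : ℕ)
    (hemb : ∃ ρ : Raag Γ →* Matrix.SpecialLinearGroup (Fin n) ℝ, Function.Injective ρ)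
    (G : Type) [Group G] (hG : IsLimitGroupOver (Raag Γ) G) :
    ∃ ρ : G →* Matrix.SpecialLinearGroup (Fin n) ℝ, Function.Injective ρ :=
  limit_group_embeds_in_SL_general hemb hG
end
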